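/- arXiv:1201.1818 — 4 statements merged into one kernel-verified Lean document; each statement's English description precedes it below -/
import Mathlib

section
/- Let (M,d) be a metric space with a σ-finite Borel measure μ, let m ≥ 1, 1 ≤ p < ∞, and write X = L^p(μ; ℂ^m). Let D : Dom(D) ⊆ X → X be a densely defined linear operator and let V : ℝ → B(X) be a C₀ group generated by iD satisfying ‖V(t)u‖_p ≤ c·e^{ω|t|}·‖u‖_p for all t ∈ ℝ and u ∈ X, for some constants c ≥ 1 and ω ≥ 0. Suppose there is a constant κ > 0 such that for every bounded Lipschitz function η : M → ℝ and every u ∈ Dom(D): (i) η·u ∈ Dom(D); (ii) ‖η·(Du) − D(η·u)‖_p ≤ κ·Lip(η)·‖u‖_p; and (iii) η²·(Du) − 2η·D(η·u) + D(η²·u) = 0 in X (i.e. the double commutator [M_η,[M_η,D]] vanishes). Then the group V has finite propagation speed at most cκ: for every closed set K ⊆ M, every u ∈ X with u = 0 μ-a.e. on M∖K, and every t ∈ ℝ, one has V(t)u = 0 μ-a.e. on the set {x ∈ M : dist(x,K) > cκ|t|}. -/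
open MeasureTheory Complex

section Abstract
open Filter Topology

variable {E : Type*} [NormedAddCommGroup E] [NormedSpace ℂ E]

/-- Iterated commutators of `a` with `V t`. -/
noncomputable def fpsW (a : E →L[ℂ] E) (V : ℝ → E →L[ℂ] E) : ℕ → ℝ → E →L[ℂ] E
  | 0, t => V t
  | n + 1, t => a.comp (fpsW a V n t) - (fpsW a V n t).comp a

lemma fps_strong (V : ℝ → E →L[ℂ] E) (c ω : ℝ)
    (hVcont : ∀ u, Continuous fun t => V t u)
    (hVbound : ∀ (t : ℝ) u, ‖V t u‖ ≤ c * Real.exp (ω * |t|) * ‖u‖)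
    (l : Filter ℝ) (g : ℝ → ℝ) (t₀ : ℝ) (hg : Tendsto g l (𝓝 t₀))
    (y : ℝ → E) (y₀ : E) (hy : Tendsto y l (𝓝 y₀)) :
    Tendsto (fun s => V (g s) (y s)) l (𝓝 (V t₀ y₀)) := by
  have h1 : Tendsto (fun s => V (g s) y₀) l (𝓝 (V t₀ y₀)) :=
    ((hVcont y₀).tendsto t₀).comp hg
  have h2 : Tendsto (fun s => V (g s) (y s - y₀)) l (𝓝 0) := by
    apply squeeze_zero_norm (fun s => hVbound (g s) (y s - y₀))
    have h3 : Tendsto (fun s => c * Real.exp (ω * |g s|)) l (𝓝 (c * Real.exp (ω * |t₀|))) := by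
      have : Continuous fun r : ℝ => c * Real.exp (ω * |r|) := by fun_prop
      exact (this.tendsto t₀).comp hg
    have h4 : Tendsto (fun s => ‖y s - y₀‖) l (𝓝 0) := by
      simpa using (hy.sub_const y₀).norm
    simpa using h3.mul h4
  have := h2.add h1
  simpa using this

lemma fps_deriv (V : ℝ → E →L[ℂ] E) (c ω : ℝ)
    (hVcont : ∀ u, Continuous fun t => V t u)
    (hVbound : ∀ (t : ℝ) u, ‖V t u‖ ≤ c * Real.exp (ω * |t|) * ‖u‖)
    (t s : ℝ) (w : ℝ → E) (w' d : E) (hw : HasDerivAt w w' s)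
    (hd : HasDerivAt (fun r => V r (w s)) d (t - s)) :
    HasDerivAt (fun r => V (t - r) (w r)) (V (t - s) w' - d) s := by
  have hd' : HasDerivAt (fun r => V (t - r) (w s)) (-d) s := by
    have := HasDerivAt.scomp s hd ((hasDerivAt_id s).const_sub t)
    simpa [Function.comp_def] using this
  rw [hasDerivAt_iff_tendsto_slope] at hw hd' ⊢
  have hg : Tendsto (fun r : ℝ => t - r) (𝓝[≠] s) (𝓝 (t - s)) := by
    have : Continuous fun r : ℝ => t - r := by fun_prop
    exact (this.tendsto s).mono_left nhdsWithin_le_nhds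
  have h1 := fps_strong V c ω hVcont hVbound _ _ _ hg _ _ hw
  rw [sub_eq_add_neg]
  refine (h1.add hd').congr fun r => ?_
  simp only [slope_def_module]
  rw [ContinuousLinearMap.map_smul_of_tower, map_sub, ← smul_add]
  congr 1
  abel

lemma fps_core (Dom : Submodule ℂ E) (hdense : Dense (Dom : Set E)) (D : E → E)
    (hDadd : ∀ u ∈ Dom, ∀ v ∈ Dom, D (u + v) = D u + D v)
    (hDsmul : ∀ (a : ℂ), ∀ u ∈ Dom, D (a • u) = a • D u)
    (V : ℝ → E →L[ℂ] E)
    (c ω : ℝ) (hc : 1 ≤ c)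
    (hV0 : V 0 = ContinuousLinearMap.id ℂ _)
    (hVcont : ∀ u, Continuous fun t => V t u)
    (hVdom : ∀ t : ℝ, ∀ u ∈ Dom, V t u ∈ Dom)
    (hVderiv : ∀ t : ℝ, ∀ u ∈ Dom,
      HasDerivAt (fun s => V s u) (Complex.I • V t (D u)) t)
    (hVD : ∀ t : ℝ, ∀ u ∈ Dom, V t (D u) = D (V t u))
    (hVbound : ∀ (t : ℝ) u, ‖V t u‖ ≤ c * Real.exp (ω * |t|) * ‖u‖)
    (κ : ℝ) (hκ : 0 < κ) (a : E →L[ℂ] E)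
    (hcomm : ∀ u ∈ Dom, a u ∈ Dom ∧ ‖a (D u) - D (a u)‖ ≤ κ * ‖u‖ ∧
      a (a (D u)) - (2 : ℂ) • a (D (a u)) + D (a (a u)) = 0)
    (u : E) (hu : a u = 0) (t : ℝ) (ht : 0 ≤ t) (n : ℕ) :
    ‖(a ^ n) (V t u)‖ ≤ c * Real.exp (ω * t) * ‖u‖ * (c * κ * t) ^ n := by
  have hDsub : ∀ u ∈ Dom, ∀ v ∈ Dom, D (u - v) = D u - D v := by
    intro u hu v hv
    have h1 : u - v = u + (-1 : ℂ) • v := by simp [sub_eq_add_neg]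
    rw [h1, hDadd u hu _ (Dom.smul_mem _ hv), hDsmul _ v hv]
    simp [sub_eq_add_neg]
  have Wdom : ∀ n s, ∀ u ∈ Dom, fpsW a V n s u ∈ Dom := by
    intro n
    induction n with
    | zero => exact fun s u hu => hVdom s u hu
    | succ n ih =>
      intro s u hu
      exact Dom.sub_mem (hcomm _ (ih s u hu)).1 (ih s _ (hcomm u hu).1)
  have W0 : ∀ n u, fpsW a V (n + 1) 0 u = 0 := by
    intro n
    induction n with
    | zero => intro u; simp [fpsW, hV0]
    | succ n ih =>
      intro u
      rw [fpsW]
      simp [ih]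
  -- the derivative of the iterated commutators
  have Wd0 : ∀ s, ∀ u ∈ Dom, HasDerivAt (fun r => fpsW a V 0 r u)
      (I • D (fpsW a V 0 s u)) s := by
    intro s u hu
    have := hVderiv s u hu
    rw [hVD s u hu] at this
    exact this
  have Wd : ∀ n s, ∀ u ∈ Dom, HasDerivAt (fun r => fpsW a V (n + 1) r u)
      (I • (D (fpsW a V (n + 1) s u) +
        ((n + 1 : ℕ) : ℂ) • (a (D (fpsW a V n s u)) - D (a (fpsW a V n s u))))) s := by
    intro n
    induction n with
    | zero =>
      intro s u hu
      have hau := (hcomm u hu).1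
      have h1 := (a.hasFDerivAt.restrictScalars ℝ).comp_hasDerivAt s (Wd0 s u hu)
      have h := h1.sub (Wd0 s _ hau)
      refine h.congr_deriv ?_
      have hw := Wdom 0 s u hu
      have e : fpsW a V (0 + 1) s u = a (fpsW a V 0 s u) - fpsW a V 0 s (a u) := rfl
      rw [e, hDsub _ (hcomm _ hw).1 _ (Wdom 0 s _ hau)]
      simp only [ContinuousLinearMap.coe_restrictScalars', map_smul]
      module
    | succ n ih =>
      intro s u hu
      have hau := (hcomm u hu).1
      have h1 := (a.hasFDerivAt.restrictScalars ℝ).comp_hasDerivAt s (ih s u hu)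
      have h := h1.sub (ih s _ hau)
      refine h.congr_deriv ?_
      have hw := Wdom (n + 1) s u hu
      have hx := Wdom n s u hu
      have hy := Wdom n s _ hau
      have e : fpsW a V (n + 1 + 1) s u
        = a (fpsW a V (n + 1) s u) - fpsW a V (n + 1) s (a u) := rfl
      have e2 : fpsW a V (n + 1) s u
        = a (fpsW a V n s u) - fpsW a V n s (a u) := rfl
      have hax := (hcomm _ hx).1
      have hB : a (D (fpsW a V (n + 1) s u)) - D (a (fpsW a V (n + 1) s u)) =
          a (a (D (fpsW a V n s u)) - D (a (fpsW a V n s u)))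
          - (a (D (fpsW a V n s (a u))) - D (a (fpsW a V n s (a u)))) := by
        rw [e2, hDsub _ hax _ hy, map_sub, map_sub,
          hDsub _ (hcomm _ hax).1 _ (hcomm _ hy).1, map_sub]
        have h3 := (hcomm _ hx).2.2
        rw [← sub_eq_zero, ← neg_eq_zero, ← h3]
        module
      rw [e, hDsub _ (hcomm _ hw).1 _ (Wdom (n + 1) s _ hau)]
      simp only [ContinuousLinearMap.coe_restrictScalars', map_smul, map_add]
      have hB' : a (a (D (fpsW a V n s u)) - D (a (fpsW a V n s u)))
          = a (D (fpsW a V (n + 1) s u)) - D (a (fpsW a V (n + 1) s u))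
          + (a (D (fpsW a V n s (a u))) - D (a (fpsW a V n s (a u)))) := by
        rw [hB]; abel
      rw [hB']
      push_cast
      module
  have key : ∀ n, ∀ s, 0 ≤ s → ∀ u,
      ‖fpsW a V n s u‖ ≤ c * Real.exp (ω * s) * ‖u‖ * (c * κ * s) ^ n := by
    intro n
    induction n with
    | zero =>
      intro s hs u
      have := hVbound s u
      rw [abs_of_nonneg hs] at this
      simpa [fpsW] using this
    | succ n ih =>
      intro t ht u
      refine hdense.induction (P := fun u => ‖fpsW a V (n + 1) t u‖ ≤
        c * Real.exp (ω * t) * ‖u‖ * (c * κ * t) ^ (n + 1)) ?_ ?_ u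
      · intro u hu
        let C : ℝ := c * Real.exp (ω * t) * ‖u‖ * (c * κ) ^ (n + 1)
        have hd : ∀ s, HasDerivAt (fun r => V (t - r) (fpsW a V (n + 1) r u))
            (V (t - s) (I • ((n + 1 : ℕ) : ℂ) •
              (a (D (fpsW a V n s u)) - D (a (fpsW a V n s u))))) s := by
          intro s
          refine (fps_deriv V c ω hVcont hVbound t s _ _ _ (Wd n s u hu)
            (hVderiv (t - s) _ (Wdom (n + 1) s u hu))).congr_deriv ?_
          simp only [map_smul, map_add, smul_add]
          abel
        have := image_norm_le_of_norm_deriv_right_le_deriv_boundary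
          (f := fun r => V (t - r) (fpsW a V (n + 1) r u)) (a := 0) (b := t)
          (B := fun s => C * s ^ (n + 1)) (B' := fun s => C * ((n + 1 : ℕ) * s ^ n))
          (fun s _ => (hd s).continuousAt.continuousWithinAt)
          (fun s _ => (hd s).hasDerivWithinAt)
          (by simp [W0])
          (fun s => by simpa using (hasDerivAt_pow (n + 1) s).const_mul C)
          (by
            intro s hs
            have hs0 : 0 ≤ s := hs.1
            have hts : 0 ≤ t - s := by linarith [hs.2]
            refine (hVbound _ _).trans ?_
            rw [abs_of_nonneg hts, norm_smul, norm_smul, Complex.norm_I, one_mul,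
              Complex.norm_natCast]
            have h1 := (hcomm _ (Wdom n s u hu)).2.1
            have h2 := ih s hs0 u
            have hE : Real.exp (ω * t) = Real.exp (ω * (t - s)) * Real.exp (ω * s) := by
              rw [← Real.exp_add]; ring_nf
            calc _ ≤ c * Real.exp (ω * (t - s)) * (((n + 1 : ℕ) : ℝ) * (κ *
                (c * Real.exp (ω * s) * ‖u‖ * (c * κ * s) ^ n))) := by
                  gcongr
                  exact h1.trans (by gcongr)
              _ = _ := by
                  simp only [C]
                  rw [hE]
                  ring)
          (Set.right_mem_Icc.2 ht)
        simp only [sub_self, hV0, ContinuousLinearMap.coe_id', id] at this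
        refine this.trans (le_of_eq ?_)
        simp only [C]
        ring
      · exact isClosed_le (by fun_prop) (by fun_prop)
  have hpow : ∀ n, fpsW a V n t u = (a ^ n) (V t u) := by
    intro n
    induction n with
    | zero => simp [fpsW]
    | succ n ih =>
      rw [fpsW]
      simp [ih, hu, pow_succ']
  rw [← hpow]
  exact key n t ht u

lemma fps_core_neg (Dom : Submodule ℂ E) (hdense : Dense (Dom : Set E)) (D : E → E)
    (hDadd : ∀ u ∈ Dom, ∀ v ∈ Dom, D (u + v) = D u + D v)
    (hDsmul : ∀ (a : ℂ), ∀ u ∈ Dom, D (a • u) = a • D u)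
    (V : ℝ → E →L[ℂ] E)
    (c ω : ℝ) (hc : 1 ≤ c)
    (hV0 : V 0 = ContinuousLinearMap.id ℂ _)
    (hVcont : ∀ u, Continuous fun t => V t u)
    (hVdom : ∀ t : ℝ, ∀ u ∈ Dom, V t u ∈ Dom)
    (hVderiv : ∀ t : ℝ, ∀ u ∈ Dom,
      HasDerivAt (fun s => V s u) (Complex.I • V t (D u)) t)
    (hVD : ∀ t : ℝ, ∀ u ∈ Dom, V t (D u) = D (V t u))
    (hVbound : ∀ (t : ℝ) u, ‖V t u‖ ≤ c * Real.exp (ω * |t|) * ‖u‖)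
    (κ : ℝ) (hκ : 0 < κ) (a : E →L[ℂ] E)
    (hcomm : ∀ u ∈ Dom, a u ∈ Dom ∧ ‖a (D u) - D (a u)‖ ≤ κ * ‖u‖ ∧
      a (a (D u)) - (2 : ℂ) • a (D (a u)) + D (a (a u)) = 0)
    (u : E) (hu : a u = 0) (t : ℝ) (ht : t ≤ 0) (n : ℕ) :
    ‖(a ^ n) (V t u)‖ ≤ c * Real.exp (ω * -t) * ‖u‖ * (c * κ * -t) ^ n := by
  have := fps_core Dom hdense (fun u => - D u)
    (fun u hu v hv => by rw [hDadd u hu v hv]; abel)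
    (fun b u hu => by rw [hDsmul b u hu, smul_neg]) (fun s => V (-s)) c ω hc
    (by simpa using hV0) (fun u => (hVcont u).comp continuous_neg)
    (fun s u hu => hVdom (-s) u hu)
    (fun s u hu => by
      have := HasDerivAt.scomp s (hVderiv (-s) u hu) (hasDerivAt_neg s)
      simpa [Function.comp_def] using this)
    (fun s u hu => by rw [map_neg, hVD (-s) u hu])
    (fun s u => by simpa using hVbound (-s) u)
    κ hκ a
    (fun u hu => by
      obtain ⟨h1, h2, h3⟩ := hcomm u hu
      refine ⟨h1, ?_, ?_⟩
      · have e : a (-D u) - -D (a u) = -(a (D u) - D (a u)) := by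
          rw [map_neg]; abel
        rw [e, norm_neg]
        exact h2
      · rw [map_neg, map_neg, map_neg, ← neg_eq_zero, ← h3]
        module) u hu (-t) (by linarith) n
  rwa [neg_neg] at this

end Abstract

lemma fps_mul {M : Type*} [MeasurableSpace M] (μ : Measure M) (m : ℕ) (p : ENNReal)
    [Fact (1 ≤ p)] (η : M → ℝ) (hη : Measurable η) (C : ℝ) (hC : ∀ x, |η x| ≤ C) :
    ∃ a : Lp (EuclideanSpace ℂ (Fin m)) p μ →L[ℂ] Lp (EuclideanSpace ℂ (Fin m)) p μ,
      ∀ u, (a u : M → EuclideanSpace ℂ (Fin m))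
        =ᵐ[μ] fun x => (η x : ℂ) • (u : M → EuclideanSpace ℂ (Fin m)) x := by
  have hm : MemLp (fun x => (η x : ℂ)) ⊤ μ := by
    refine memLp_top_of_bound (Complex.measurable_ofReal.comp hη).aestronglyMeasurable C ?_
    exact Filter.Eventually.of_forall fun x => by simpa using hC x
  refine ⟨(ContinuousLinearMap.lsmul ℂ ℂ).holderL μ ⊤ p p (hm.toLp _), fun u => ?_⟩
  have h := (ContinuousLinearMap.lsmul ℂ ℂ (E := EuclideanSpace ℂ (Fin m))).coeFn_holder
    (r := p) (hm.toLp _) u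
  filter_upwards [h, hm.coeFn_toLp] with x hx h2
  refine hx.trans ?_
  rw [h2]
  rfl

/-- **Finite propagation speed for first order systems on metric measure spaces**
(McIntosh–Morris, Theorem 2). -/
theorem finite_propagation_speed
    {M : Type*} [MetricSpace M] [MeasurableSpace M] [BorelSpace M]
    (μ : Measure M) [SigmaFinite μ]
    (m : ℕ) (hm : 1 ≤ m) (p : ENNReal) [hp1 : Fact (1 ≤ p)] (hp2 : p ≠ ⊤)
    (Dom : Submodule ℂ (Lp (EuclideanSpace ℂ (Fin m)) p μ))
    (hdense : Dense (Dom : Set (Lp (EuclideanSpace ℂ (Fin m)) p μ)))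
    (D : Lp (EuclideanSpace ℂ (Fin m)) p μ → Lp (EuclideanSpace ℂ (Fin m)) p μ)
    (hDadd : ∀ u ∈ Dom, ∀ v ∈ Dom, D (u + v) = D u + D v)
    (hDsmul : ∀ (a : ℂ), ∀ u ∈ Dom, D (a • u) = a • D u)
    (V : ℝ → Lp (EuclideanSpace ℂ (Fin m)) p μ →L[ℂ]
      Lp (EuclideanSpace ℂ (Fin m)) p μ)
    (c ω : ℝ) (hc : 1 ≤ c) (hω : 0 ≤ ω)
    (hV0 : V 0 = ContinuousLinearMap.id ℂ _)
    (hVgrp : ∀ s t : ℝ, V (s + t) = (V s).comp (V t))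
    (hVcont : ∀ u, Continuous fun t => V t u)
    (hVdom : ∀ t : ℝ, ∀ u ∈ Dom, V t u ∈ Dom)
    (hVderiv : ∀ t : ℝ, ∀ u ∈ Dom,
      HasDerivAt (fun s => V s u) (Complex.I • V t (D u)) t)
    (hVD : ∀ t : ℝ, ∀ u ∈ Dom, V t (D u) = D (V t u))
    (hVbound : ∀ (t : ℝ) u, ‖V t u‖ ≤ c * Real.exp (ω * |t|) * ‖u‖)
    (κ : ℝ) (hκ : 0 < κ)
    (hcomm : ∀ (η : M → ℝ) (L : NNReal), LipschitzWith L η → (∃ C, ∀ x, |η x| ≤ C) →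
      ∀ Mη : Lp (EuclideanSpace ℂ (Fin m)) p μ →L[ℂ]
          Lp (EuclideanSpace ℂ (Fin m)) p μ,
        (∀ u, (Mη u : M → EuclideanSpace ℂ (Fin m))
            =ᵐ[μ] fun x => (η x : ℂ) • (u : M → EuclideanSpace ℂ (Fin m)) x) →
        ∀ u ∈ Dom, Mη u ∈ Dom ∧
          ‖Mη (D u) - D (Mη u)‖ ≤ κ * L * ‖u‖ ∧
          Mη (Mη (D u)) - (2 : ℂ) • Mη (D (Mη u)) + D (Mη (Mη u)) = 0)
    (K : Set M) (hK : IsClosed K)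
    (u : Lp (EuclideanSpace ℂ (Fin m)) p μ)
    (hu : ∀ᵐ x ∂μ, x ∉ K → (u : M → EuclideanSpace ℂ (Fin m)) x = 0)
    (t : ℝ) :
    ∀ᵐ x ∂μ, c * κ * |t| < Metric.infDist x K →
      (V t u : M → EuclideanSpace ℂ (Fin m)) x = 0 := by
  rcases K.eq_empty_or_nonempty with hKe | hKn
  · subst hKe
    refine Filter.Eventually.of_forall fun x hx => ?_
    rw [Metric.infDist_empty] at hx
    have : 0 ≤ c * κ * |t| := by positivity
    linarith
  set r : ℝ := c * κ * |t| with hr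
  have hr0 : 0 ≤ r := by positivity
  let η : M → ℝ := fun x => min (Metric.infDist x K) (r + 1)
  have hη0 : ∀ x, 0 ≤ η x := fun x => le_min Metric.infDist_nonneg (by linarith)
  have hηL : LipschitzWith 1 η := (Metric.lipschitz_infDist_pt K).min_const (r + 1)
  have hηb : ∀ x, |η x| ≤ r + 1 := fun x => by
    rw [abs_of_nonneg (hη0 x)]; exact min_le_right _ _
  obtain ⟨a, ha⟩ := fps_mul μ m p η hηL.continuous.measurable (r + 1) hηb
  have hca := hcomm η 1 hηL ⟨_, hηb⟩ a ha
  have hau : a u = 0 := by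
    apply Lp.ext
    filter_upwards [ha u, hu, Lp.coeFn_zero (EuclideanSpace ℂ (Fin m)) p μ] with x h1 h2 h3
    rw [h1, h3]
    by_cases hx : x ∈ K
    · simp [η, Metric.infDist_zero_of_mem hx, hr0, add_nonneg]
    · simp [h2 hx]
  have hpow : ∀ n, ‖(a ^ n) (V t u)‖ ≤ c * Real.exp (ω * |t|) * ‖u‖ * r ^ n := by
    intro n
    rcases le_total 0 t with ht | ht
    · have := fps_core Dom hdense D hDadd hDsmul V c ω hc hV0 hVcont hVdom hVderiv hVD hVbound
        κ hκ a (fun u hu => by simpa using hca u hu) u hau t ht n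
      rwa [hr, abs_of_nonneg ht]
    · have := fps_core_neg Dom hdense D hDadd hDsmul V c ω hc hV0 hVcont hVdom hVderiv hVD hVbound
        κ hκ a (fun u hu => by simpa using hca u hu) u hau t ht n
      rwa [hr, abs_of_nonpos ht]
  have hapow : ∀ n, ((a ^ n) (V t u) : M → EuclideanSpace ℂ (Fin m)) =ᵐ[μ]
      fun x => ((η x : ℂ) ^ n) • (V t u : M → EuclideanSpace ℂ (Fin m)) x := by
    intro n
    induction n with
    | zero => simp
    | succ n ih =>
      rw [pow_succ']
      filter_upwards [ih, ha ((a ^ n) (V t u))] with x h1 h2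
      refine h2.trans ?_
      rw [h1, smul_smul, pow_succ']
  have hk : ∀ k : ℕ, ∀ᵐ x ∂μ, r + 1 / ((k : ℝ) + 1) < Metric.infDist x K →
      (V t u : M → EuclideanSpace ℂ (Fin m)) x = 0 := by
    intro k
    set ε : ℝ := 1 / ((k : ℝ) + 1) with hε
    have hε0 : 0 < ε := by positivity
    have hε1 : ε ≤ 1 := by
      rw [hε, div_le_one (by positivity)]
      have : (0 : ℝ) ≤ k := by positivity
      linarith
    let S : Set M := {x | r + ε < Metric.infDist x K}
    have hS : MeasurableSet S :=
      measurableSet_lt measurable_const (Metric.continuous_infDist_pt K).measurable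
    have hw := (Lp.memLp (V t u)).indicator hS
    let w := hw.toLp _
    have hwn : ∀ n, (r + ε) ^ n * ‖w‖ ≤ c * Real.exp (ω * |t|) * ‖u‖ * r ^ n := by
      intro n
      refine le_trans ?_ (hpow n)
      have e : (r + ε) ^ n * ‖w‖ = ‖(((r + ε : ℝ) : ℂ) ^ n) • w‖ := by
        rw [norm_smul, norm_pow, Complex.norm_real, Real.norm_of_nonneg (by linarith)]
      rw [e]
      apply Lp.norm_le_norm_of_ae_le
      filter_upwards [hapow n, hw.coeFn_toLp, Lp.coeFn_smul (((r + ε : ℝ) : ℂ) ^ n) w]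
        with x h1 h2 h3
      rw [h1, h3, Pi.smul_apply, h2]
      by_cases hx : x ∈ S
      · rw [Set.indicator_of_mem hx, norm_smul, norm_smul, norm_pow, norm_pow,
          Complex.norm_real, Complex.norm_real, Real.norm_of_nonneg (by linarith),
          Real.norm_of_nonneg (hη0 x)]
        have : r + ε ≤ η x := le_min (le_of_lt hx) (by linarith)
        gcongr
      · rw [Set.indicator_of_notMem hx]
        simp
    have hw0 : w = 0 := by
      rw [← norm_le_zero_iff]
      have hq : Filter.Tendsto (fun n : ℕ => c * Real.exp (ω * |t|) * ‖u‖ * (r / (r + ε)) ^ n)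
          Filter.atTop (nhds 0) := by
        have := (tendsto_pow_atTop_nhds_zero_of_lt_one (r := r / (r + ε)) (by positivity)
          (by rw [div_lt_one (by linarith)]; linarith)).const_mul
            (c * Real.exp (ω * |t|) * ‖u‖)
        simpa using this
      refine ge_of_tendsto' hq fun n => ?_
      rw [div_pow, ← mul_div_assoc, le_div_iff₀ (by positivity), mul_comm]
      exact hwn n
    have h1 := hw.coeFn_toLp
    have h2 : (w : M → EuclideanSpace ℂ (Fin m)) =ᵐ[μ] 0 := by
      rw [hw0]; exact Lp.coeFn_zero _ _ _
    filter_upwards [h1, h2] with x h3 h4 hx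
    have hx' : x ∈ S := hx
    rw [Set.indicator_of_mem hx'] at h3
    rw [← h3]
    exact h4
  filter_upwards [ae_all_iff.2 hk] with x hx hlt
  obtain ⟨k, hk'⟩ := exists_nat_one_div_lt (sub_pos.2 hlt)
  exact hx k (by linarith)
end

section
/- Let (M,d) be a metric space with a σ-finite Borel measure μ, let m ≥ 1, 1 ≤ p < ∞, and write X = L^p(μ; ℂ^m). Let N : X → [0,∞) be a norm on X equivalent to the L^p norm. Let D : Dom(D) ⊆ X → X be a densely defined linear operator and let V : ℝ → B(X) be a C₀ group generated by iD satisfying N(V(t)u) ≤ c·e^{ω|t|}·N(u) for all t ∈ ℝ and u ∈ X, for some constants c ≥ 1 and ω ≥ 0. Suppose there is a constant κ > 0 such that for every bounded Lipschitz function η : M → ℝ and every u ∈ Dom(D): (i) η·u ∈ Dom(D); (ii) N(η·(Du) − D(η·u)) ≤ κ·Lip(η)·N(u); and (iii) η²·(Du) − 2η·D(η·u) + D(η²·u) = 0 in X. Then for every closed set K ⊆ M, every u ∈ X with u = 0 μ-a.e. on M∖K, and every t ∈ ℝ, one has V(t)u = 0 μ-a.e. on {x ∈ M : dist(x,K) >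 cκ|t|}. -/
open MeasureTheory Complex

namespace FPS

open Filter Topology

section Abstract

variable {X : Type*} [NormedAddCommGroup X] [NormedSpace ℂ X]

/-- Mean value inequality for a continuous sublinear functional. -/
lemma sublinear_mvt (N : X → ℝ) (hNc : Continuous N)
    (hNtri : ∀ u v, N (u + v) ≤ N u + N v)
    (hNsmul : ∀ (a : ℂ) u, N (a • u) = ‖a‖ * N u)
    (g g' : ℝ → X) (b b' : ℝ → ℝ) (t : ℝ) (ht : 0 ≤ t)
    (hg : ∀ s, HasDerivAt g (g' s) s)
    (hb : ∀ s, HasDerivAt b (b' s) s)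
    (h0 : N (g 0) ≤ b 0)
    (hgb : ∀ s, 0 ≤ s → s ≤ t → N (g' s) ≤ b' s) : N (g t) ≤ b t := by
  have hgc : Continuous g := continuous_iff_continuousAt.2 fun s => (hg s).continuousAt
  have hbc : Continuous b := continuous_iff_continuousAt.2 fun s => (hb s).continuousAt
  have key := image_le_of_liminf_slope_right_le_deriv_boundary
    (f := fun s => N (g s)) (a := 0) (b := t) (B := b) (B' := b')
    (hNc.comp hgc).continuousOn h0 hbc.continuousOn
    (fun x _ => (hb x).hasDerivWithinAt) ?_
  · exact key ⟨ht, le_refl t⟩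
  intro x hx r hr
  apply Eventually.frequently
  have h1 : Tendsto (fun z => N (slope g x z)) (𝓝[>] x) (𝓝 (N (g' x))) := by
    have := (hasDerivAt_iff_tendsto_slope.1 (hg x)).mono_left
      (nhdsWithin_mono x (fun z (hz : x < z) => ne_of_gt hz))
    exact (hNc.tendsto _).comp this
  have h2 := h1.eventually (gt_mem_nhds (lt_of_le_of_lt (hgb x hx.1 hx.2.le) hr))
  filter_upwards [h2, self_mem_nhdsWithin] with z hz hxz
  refine lt_of_le_of_lt ?_ hz
  have hpos : 0 < z - x := sub_pos.2 hxz
  have e1 : slope g x z = (((z - x)⁻¹ : ℝ) : ℂ) • (g z - g x) := by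
    rw [Complex.coe_smul]; rfl
  rw [e1, hNsmul, slope_def_field, div_eq_inv_mul, Complex.norm_real, Real.norm_of_nonneg
    (inv_nonneg.2 hpos.le)]
  refine mul_le_mul_of_nonneg_left ?_ (inv_nonneg.2 hpos.le)
  have := hNtri (g z - g x) (g x)
  rw [sub_add_cancel] at this
  linarith

/-- Product rule for a strongly continuous, locally bounded operator family. -/
lemma strong_product_rule (F : ℝ → X →L[ℂ] X) (g : ℝ → X) (s C : ℝ) (g' w : X)
    (hC : ∀ᶠ z in 𝓝 s, ‖F z‖ ≤ C)
    (hF : ∀ v, ContinuousAt (fun z => F z v) s)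
    (hg : HasDerivAt g g' s) (hw : HasDerivAt (fun z => F z (g s)) w s) :
    HasDerivAt (fun z => F z (g z)) (F s g' + w) s := by
  rw [hasDerivAt_iff_tendsto_slope] at *
  have e : (slope (fun z => F z (g z)) s) =
      fun z => (F z (slope g s z - g') + F z g') + slope (fun z => F z (g s)) s z := by
    funext z
    simp only [slope, vsub_eq_sub, map_sub]
    have : F z ((z - s)⁻¹ • (g z - g s)) = (z - s)⁻¹ • (F z (g z) - F z (g s)) := by
      rw [← map_sub]
      exact ContinuousLinearMap.map_smul_of_tower (F z) _ _
    rw [this]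
    simp only [smul_sub]
    abel
  rw [e]
  refine Tendsto.add ?_ hw
  have h1 : Tendsto (fun z => F z g') (𝓝[≠] s) (𝓝 (F s g')) :=
    (hF g').tendsto.mono_left nhdsWithin_le_nhds
  have h2 : Tendsto (fun z => F z (slope g s z - g')) (𝓝[≠] s) (𝓝 0) := by
    have h3 : Tendsto (fun z => C * ‖slope g s z - g'‖) (𝓝[≠] s) (𝓝 0) := by
      have : Tendsto (fun z => ‖slope g s z - g'‖) (𝓝[≠] s) (𝓝 0) :=
        tendsto_iff_norm_sub_tendsto_zero.1 hg
      simpa using this.const_mul C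
    refine squeeze_zero_norm' ?_ h3
    filter_upwards [nhdsWithin_le_nhds hC] with z hz
    exact (F z).le_of_opNorm_le hz _
  simpa using h2.add h1

/-- Iterated commutators. -/
def T (E : X →L[ℂ] X) (V : ℝ → X →L[ℂ] X) : ℕ → ℝ → X →L[ℂ] X
  | 0, t => V t
  | n + 1, t => E.comp (T E V n t) - (T E V n t).comp E

lemma T_succ (E : X →L[ℂ] X) (V : ℝ → X →L[ℂ] X) (n t) (u : X) :
    T E V (n+1) t u = E (T E V n t u) - T E V n t (E u) := rfl

lemma T_zero_time (E : X →L[ℂ] X) (V : ℝ → X →L[ℂ] X)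
    (hV0 : V 0 = ContinuousLinearMap.id ℂ _) (n : ℕ) : T E V (n+1) 0 = 0 := by
  induction n with
  | zero => ext u; simp [T, hV0]
  | succ k ih => ext u; rw [T_succ, ih]; simp

lemma T_of_ker (E : X →L[ℂ] X) (V : ℝ → X →L[ℂ] X) (u : X) (hu : E u = 0) (n : ℕ) (t : ℝ) :
    T E V n t u = (E^[n]) (V t u) := by
  induction n with
  | zero => rfl
  | succ k ih => rw [T_succ, ih, hu, map_zero, sub_zero, Function.iterate_succ_apply']

lemma core (N : X → ℝ) (hNc : Continuous N)
    (hNtri : ∀ u v, N (u + v) ≤ N u + N v)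
    (hNsmul : ∀ (a : ℂ) u, N (a • u) = ‖a‖ * N u)
    (hNequiv : ∃ c₁ c₂ : ℝ, 0 < c₁ ∧ 0 < c₂ ∧
      ∀ u, c₁ * ‖u‖ ≤ N u ∧ N u ≤ c₂ * ‖u‖)
    (Dom : Submodule ℂ X) (hdense : Dense (Dom : Set X)) (D : X → X)
    (hDadd : ∀ u ∈ Dom, ∀ v ∈ Dom, D (u + v) = D u + D v)
    (hDsmul : ∀ (a : ℂ), ∀ u ∈ Dom, D (a • u) = a • D u)
    (V : ℝ → X →L[ℂ] X)
    (c ω : ℝ) (hc : 1 ≤ c) (hω : 0 ≤ ω)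
    (hV0 : V 0 = ContinuousLinearMap.id ℂ _)
    (hVcont : ∀ u, Continuous fun t => V t u)
    (hVdom : ∀ t : ℝ, ∀ u ∈ Dom, V t u ∈ Dom)
    (hVderiv : ∀ t : ℝ, ∀ u ∈ Dom,
      HasDerivAt (fun s => V s u) (Complex.I • V t (D u)) t)
    (hVD : ∀ t : ℝ, ∀ u ∈ Dom, V t (D u) = D (V t u))
    (hVbound : ∀ (t : ℝ) u, N (V t u) ≤ c * Real.exp (ω * |t|) * N u)
    (k : ℝ) (hk : 0 ≤ k) (E : X →L[ℂ] X)
    (hE : ∀ u ∈ Dom, E u ∈ Dom ∧ N (E (D u) - D (E u)) ≤ k * N u ∧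
      E (E (D u)) - (2 : ℂ) • E (D (E u)) + D (E (E u)) = 0)
    (t : ℝ) (ht : 0 ≤ t) (n : ℕ) (u : X) :
    N (T E V n t u) ≤ c * Real.exp (ω * t) * (c * k * t) ^ n * N u := by
  have hDsub : ∀ u ∈ Dom, ∀ v ∈ Dom, D (u - v) = D u - D v := by
    intro u hu v hv
    have := hDadd (u - v) (Dom.sub_mem hu hv) v hv
    rw [sub_add_cancel] at this
    rw [this, add_sub_cancel_right]
  set A : X → X := fun w => E (D w) - D (E w) with hA
  have hAsub : ∀ u ∈ Dom, ∀ v ∈ Dom, A (u - v) = A u - A v := by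
    intro u hu v hv
    simp only [hA]
    rw [hDsub u hu v hv, map_sub, map_sub, hDsub _ (hE u hu).1 _ (hE v hv).1]
    abel
  have hAcomm : ∀ w ∈ Dom, E (A w) = A (E w) := by
    intro w hw
    have h := (hE w hw).2.2
    simp only [hA, map_sub]
    rw [← sub_eq_zero, ← h, two_smul]
    abel
  -- domain
  have hTdom : ∀ n t, ∀ u ∈ Dom, T E V n t u ∈ Dom := by
    intro n
    induction n with
    | zero => exact hVdom
    | succ j ih =>
      intro t u hu
      rw [T_succ]
      exact Dom.sub_mem (hE _ (ih t u hu)).1 (ih t _ (hE u hu).1)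
  -- derivative
  have hTd : ∀ n t, ∀ u ∈ Dom, HasDerivAt (fun s => T E V n s u)
      (Complex.I • (D (T E V n t u) + (n : ℂ) • A (T E V (n-1) t u))) t := by
    intro n
    induction n with
    | zero =>
      intro t u hu
      have := hVderiv t u hu
      rw [hVD t u hu] at this
      simpa [T] using this
    | succ j ih =>
      intro t u hu
      have h1 := (E.restrictScalars ℝ).hasFDerivAt.comp_hasDerivAt t (ih t u hu)
      have h2 := ih t (E u) (hE u hu).1
      have h3 := h1.sub h2
      have hw := hTdom j t u hu
      have hw' := hTdom j t (E u) (hE u hu).1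
      have hj : (j : ℂ) • A (T E V j t u) = (j : ℂ) • E (A (T E V (j-1) t u))
          - (j : ℂ) • A (T E V (j-1) t (E u)) := by
        cases j with
        | zero => simp
        | succ i =>
          have a1 := hTdom i t u hu
          have a2 := hTdom i t (E u) (hE u hu).1
          rw [Nat.add_sub_cancel, T_succ, hAsub _ (hE _ a1).1 _ a2, ← hAcomm _ a1, smul_sub]
      have hEq : Complex.I • (D (T E V (j+1) t u)
            + ((j+1 : ℕ) : ℂ) • A (T E V (j+1-1) t u)) =
          (E.restrictScalars ℝ) (Complex.I • (D (T E V j t u) + (j : ℂ) • A (T E V (j-1) t u)))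
          - Complex.I • (D (T E V j t (E u)) + (j : ℂ) • A (T E V (j-1) t (E u))) := by
        rw [ContinuousLinearMap.coe_restrictScalars', map_smul, map_add, map_smul, ← smul_sub,
          Nat.add_sub_cancel, T_succ, hDsub _ (hE _ hw).1 _ hw']
        congr 1
        push_cast
        rw [add_smul, one_smul, hj]
        have : E (D (T E V j t u)) = A (T E V j t u) + D (E (T E V j t u)) := by
          simp [hA]
        rw [this]
        abel
      rw [hEq]
      exact h3
  have hNnn : ∀ u, 0 ≤ N u := by
    obtain ⟨c₁, c₂, h1, h2, h⟩ := hNequiv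
    intro u
    exact le_trans (by positivity) (h u).1
  have hVloc : ∀ s : ℝ, ∃ C, ∀ᶠ z in 𝓝 s, ‖V (t - z)‖ ≤ C := by
    obtain ⟨c₁, c₂, h1, h2, h⟩ := hNequiv
    intro s
    refine ⟨c * Real.exp (ω * (|t - s| + 1)) * c₂ / c₁, ?_⟩
    have hcont : Continuous fun z : ℝ => |t - z| := by fun_prop
    filter_upwards [hcont.continuousAt.eventually (gt_mem_nhds (lt_add_one |t - s|))] with z hz
    refine ContinuousLinearMap.opNorm_le_bound _ (by positivity) fun x => ?_
    have a1 := (h (V (t - z) x)).1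
    have a2 := hVbound (t - z) x
    have a3 := (h x).2
    have a4 : Real.exp (ω * |t - z|) ≤ Real.exp (ω * (|t - s| + 1)) :=
      Real.exp_le_exp.2 (mul_le_mul_of_nonneg_left hz.le hω)
    rw [div_mul_eq_mul_div, le_div_iff₀ h1]
    calc ‖V (t - z) x‖ * c₁ = c₁ * ‖V (t - z) x‖ := mul_comm _ _
      _ ≤ _ := a1
      _ ≤ _ := a2
      _ ≤ c * Real.exp (ω * (|t - s| + 1)) * (c₂ * ‖x‖) := by
          have := hNnn x
          gcongr
      _ = _ := by ring
  -- bound on Dom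
  have hbd : ∀ n : ℕ, ∀ s, 0 ≤ s → s ≤ t → ∀ u ∈ Dom,
      N (T E V n s u) ≤ c * Real.exp (ω * s) * (c * k * s) ^ n * N u := by
    intro n
    induction n with
    | zero =>
      intro s hs _ u hu
      have := hVbound s u
      rw [abs_of_nonneg hs] at this
      simpa [T] using this
    | succ j ih =>
      intro t' ht' htt u hu
      have hloc : ∀ s : ℝ, ∃ C, ∀ᶠ z in 𝓝 s, ‖V (t' - z)‖ ≤ C := by
        intro s
        obtain ⟨C, hC⟩ := hVloc (s + (t - t'))
        refine ⟨C, ?_⟩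
        have : Tendsto (fun z : ℝ => z + (t - t')) (𝓝 s) (𝓝 (s + (t - t'))) :=
          (continuous_add_const (t - t')).tendsto s
        filter_upwards [this.eventually hC] with z hz
        have e : t - (z + (t - t')) = t' - z := by ring
        rwa [e] at hz
      set g : ℝ → X := fun s => V (t' - s) (T E V (j+1) s u) with hg
      have hgd : ∀ s, HasDerivAt g
          (V (t' - s) ((Complex.I * ((j+1 : ℕ) : ℂ)) • A (T E V j s u))) s := by
        intro s
        obtain ⟨C, hC⟩ := hloc s
        have hd := hTdom (j+1) s u hu
        have hw : HasDerivAt (fun z => V (t' - z) (T E V (j+1) s u))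
            (-(Complex.I • V (t' - s) (D (T E V (j+1) s u)))) s := by
          have := (hVderiv (t' - s) _ hd).scomp s ((hasDerivAt_id s).const_sub t')
          simpa [Function.comp_def] using this
        have := strong_product_rule (fun z => V (t' - z)) (fun z => T E V (j+1) z u) s C _ _ hC
          (fun v => ((hVcont v).comp (continuous_const.sub continuous_id)).continuousAt)
          (hTd (j+1) s u hu) hw
        convert this using 1
        simp only [map_smul, map_add, smul_add, Nat.add_sub_cancel, mul_smul]
        abel
      have hb : ∀ s, HasDerivAt (fun s => c * Real.exp (ω * t') * (c * k * s) ^ (j+1) * N u)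
          (c * Real.exp (ω * t') * (((j+1 : ℕ) : ℝ) * (c * k * s) ^ j * (c * k)) * N u) s := by
        intro s
        have h1 : HasDerivAt (fun s : ℝ => c * k * s) (c * k) s := by
          simpa using (hasDerivAt_id s).const_mul (c * k)
        have h2 := ((h1.pow (j+1)).const_mul (c * Real.exp (ω * t'))).mul_const (N u)
        simpa using h2
      have hfin := sublinear_mvt N hNc hNtri hNsmul g _ _ _ t' ht' hgd hb ?_ ?_
      · simpa [hg, hV0] using hfin
      · have h00 : N 0 = 0 := by simpa using hNsmul 0 0
        simp [hg, T_zero_time E V hV0, h00]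
      · intro s hs hst
        have hd := hTdom j s u hu
        have b1 := hVbound (t' - s) ((Complex.I * ((j+1 : ℕ) : ℂ)) • A (T E V j s u))
        rw [hNsmul, abs_of_nonneg (sub_nonneg.2 hst), norm_mul, Complex.norm_I, one_mul,
          Complex.norm_natCast] at b1
        have b2 := (hE _ hd).2.1
        have b3 := ih s hs (hst.trans htt) u hu
        refine b1.trans ?_
        have hexp : Real.exp (ω * t') = Real.exp (ω * (t' - s)) * Real.exp (ω * s) := by
          rw [← Real.exp_add]; ring_nf
        have b4 : N (A (T E V j s u)) ≤
            k * (c * Real.exp (ω * s) * (c * k * s) ^ j * N u) :=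
          b2.trans (mul_le_mul_of_nonneg_left b3 hk)
        calc _ ≤ c * Real.exp (ω * (t' - s)) * (((j+1 : ℕ) : ℝ) *
              (k * (c * Real.exp (ω * s) * (c * k * s) ^ j * N u))) := by
              gcongr
          _ = _ := by rw [hexp]; ring
  -- extend by density
  have hcl : IsClosed {u : X | N (T E V n t u) ≤ c * Real.exp (ω * t) * (c * k * t) ^ n * N u} :=
    isClosed_le (hNc.comp (T E V n t).continuous) (continuous_const.mul hNc)
  have hsub : (Dom : Set X) ⊆
      {u : X | N (T E V n t u) ≤ c * Real.exp (ω * t) * (c * k * t) ^ n * N u} :=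
    fun u hu => hbd n t ht le_rfl u hu
  exact (hcl.closure_subset_iff.2 hsub) (hdense u)

end Abstract

lemma N_cont {X : Type*} [NormedAddCommGroup X] [NormedSpace ℂ X] (N : X → ℝ)
    (hNtri : ∀ u v, N (u + v) ≤ N u + N v)
    (hNequiv : ∃ c₁ c₂ : ℝ, 0 < c₁ ∧ 0 < c₂ ∧
      ∀ u, c₁ * ‖u‖ ≤ N u ∧ N u ≤ c₂ * ‖u‖) : Continuous N := by
  obtain ⟨c₁, c₂, h1, h2, h⟩ := hNequiv
  have : LipschitzWith ⟨c₂, h2.le⟩ N := by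
    refine LipschitzWith.of_le_add_mul _ fun x y => ?_
    have a := hNtri (x - y) y
    rw [sub_add_cancel] at a
    have b := (h (x - y)).2
    rw [dist_eq_norm]
    change N x ≤ N y + c₂ * _
    linarith
  exact this.continuous

section Mult

variable {M : Type*} [MeasurableSpace M] {μ : Measure M} {F : Type*} [NormedAddCommGroup F]
  [NormedSpace ℂ F] {p : ENNReal} [Fact (1 ≤ p)]

/-- Existence of bounded multiplication operators. -/
lemma exists_mult (η : M → ℝ) (hη : Measurable η) (C : ℝ) (hC : ∀ x, |η x| ≤ C) :
    ∃ E : Lp F p μ →L[ℂ] Lp F p μ, ∀ u, (E u : M → F) =ᵐ[μ] fun x => (η x : ℂ) • (u : M → F) x := by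
  have hm : ∀ u : Lp F p μ, MemLp (fun x => (η x : ℂ) • (u : M → F) x) p μ := by
    intro u
    refine MemLp.of_le_mul (c := C) (Lp.memLp u) ?_ ?_
    · exact (Complex.measurable_ofReal.comp hη).aestronglyMeasurable.smul
        (Lp.aestronglyMeasurable u)
    · refine Eventually.of_forall fun x => ?_
      rw [norm_smul, Complex.norm_real]
      exact mul_le_mul_of_nonneg_right (hC x) (norm_nonneg _)
  refine ⟨LinearMap.mkContinuous
    { toFun := fun u => (hm u).toLp
      map_add' := ?_
      map_smul' := ?_ } C ?_, ?_⟩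
  · intro u v
    apply Lp.ext
    filter_upwards [(hm (u+v)).coeFn_toLp, (hm u).coeFn_toLp, (hm v).coeFn_toLp,
      Lp.coeFn_add u v, Lp.coeFn_add (hm u).toLp (hm v).toLp] with x h1 h2 h3 h4 h5
    rw [h1, h5, Pi.add_apply, h2, h3, h4, Pi.add_apply, smul_add]
  · intro a u
    apply Lp.ext
    filter_upwards [(hm (a • u)).coeFn_toLp, (hm u).coeFn_toLp,
      Lp.coeFn_smul a u, Lp.coeFn_smul a (hm u).toLp] with x h1 h2 h4 h5
    rw [h1, RingHom.id_apply, h5, Pi.smul_apply, h2, h4, Pi.smul_apply, smul_comm]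
  · intro u
    refine Lp.norm_le_mul_norm_of_ae_le_mul ?_
    filter_upwards [(hm u).coeFn_toLp] with x h1
    change ‖((hm u).toLp : M → F) x‖ ≤ _
    rw [h1, norm_smul, Complex.norm_real]
    exact mul_le_mul_of_nonneg_right (hC x) (norm_nonneg _)
  · intro u
    exact (hm u).coeFn_toLp

lemma vanish (η : M → ℝ) (hη : Measurable η) (E : Lp F p μ →L[ℂ] Lp F p μ)
    (hE : ∀ u, (E u : M → F) =ᵐ[μ] fun x => (η x : ℂ) • (u : M → F) x)
    (f : Lp F p μ) (a B : ℝ) (ha : 0 ≤ a) (hB : ∀ n : ℕ, ‖E^[n] f‖ ≤ B * a ^ n) :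
    ∀ᵐ x ∂μ, a < η x → (f : M → F) x = 0 := by
  have hEn : ∀ n : ℕ, (E^[n] f : M → F) =ᵐ[μ] fun x => ((η x : ℂ) ^ n) • (f : M → F) x := by
    intro n
    induction n with
    | zero => simp
    | succ j ih =>
      rw [Function.iterate_succ_apply']
      filter_upwards [hE (E^[j] f), ih] with x h1 h2
      rw [h1, h2, smul_smul, pow_succ']
  have hb : ∀ b : ℝ, a < b → ∀ᵐ x ∂μ, b ≤ η x → (f : M → F) x = 0 := by
    intro b hab
    have hbpos : 0 < b := ha.trans_lt hab
    have hS : MeasurableSet {x | b ≤ η x} := measurableSet_le measurable_const hη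
    set hg := (Lp.memLp f).indicator hS
    set g : Lp F p μ := hg.toLp with hgdef
    have hle : ∀ n : ℕ, b ^ n * ‖g‖ ≤ B * a ^ n := by
      intro n
      refine le_trans ?_ (hB n)
      have : b ^ n * ‖g‖ = ‖((b : ℂ) ^ n) • g‖ := by
        rw [norm_smul, norm_pow, Complex.norm_real, Real.norm_of_nonneg hbpos.le]
      rw [this]
      refine Lp.norm_le_norm_of_ae_le ?_
      filter_upwards [hEn n, Lp.coeFn_smul ((b : ℂ) ^ n) g, hg.coeFn_toLp] with x h1 h2 h3
      rw [h1, h2, Pi.smul_apply, h3]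
      by_cases hx : b ≤ η x
      · rw [Set.indicator_of_mem (show x ∈ {x | b ≤ η x} from hx), norm_smul, norm_smul,
          norm_pow, norm_pow, Complex.norm_real, Complex.norm_real,
          Real.norm_of_nonneg hbpos.le, Real.norm_of_nonneg (hbpos.le.trans hx)]
        gcongr
      · rw [Set.indicator_of_notMem (show x ∉ {x | b ≤ η x} from hx), smul_zero, norm_zero]
        exact norm_nonneg _
    have hlim : Tendsto (fun n : ℕ => B * (a / b) ^ n) atTop (𝓝 0) := by
      have := (tendsto_pow_atTop_nhds_zero_of_lt_one (div_nonneg ha hbpos.le)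
        ((div_lt_one hbpos).2 hab)).const_mul B
      simpa using this
    have hg0 : ‖g‖ ≤ 0 := by
      refine ge_of_tendsto' hlim fun n => ?_
      rw [div_pow, mul_div_assoc', le_div_iff₀ (pow_pos hbpos n), mul_comm]
      exact hle n
    have hgz : g = 0 := norm_le_zero_iff.1 hg0
    have h4 : (g : M → F) =ᵐ[μ] 0 := by rw [hgz]; exact Lp.coeFn_zero _ _ _
    filter_upwards [h4, hg.coeFn_toLp] with x h5 h6 hx
    rw [← hgdef, h5, Set.indicator_of_mem (show x ∈ {x | b ≤ η x} from hx)] at h6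
    exact h6.symm
  have hall : ∀ᵐ x ∂μ, ∀ j : ℕ, a + 1 / ((j : ℝ) + 1) ≤ η x → (f : M → F) x = 0 :=
    ae_all_iff.2 fun j => hb _ (by
      have : (0:ℝ) < 1 / ((j : ℝ) + 1) := by positivity
      linarith)
  filter_upwards [hall] with x hx hax
  obtain ⟨j, hj⟩ := exists_nat_one_div_lt (sub_pos.2 hax)
  exact hx j (by linarith)

end Mult

end FPS

/-- **Finite propagation speed for first order systems on metric measure spaces,
with respect to an equivalent norm** (McIntosh–Morris, Theorem 2 with Remark on
equivalent norms). -/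
theorem finite_propagation_speed_equivalent_norm
    {M : Type*} [MetricSpace M] [MeasurableSpace M] [BorelSpace M]
    (μ : Measure M) [SigmaFinite μ]
    (m : ℕ) (hm : 1 ≤ m) (p : ENNReal) [hp1 : Fact (1 ≤ p)] (hp2 : p ≠ ⊤)
    (N : Lp (EuclideanSpace ℂ (Fin m)) p μ → ℝ)
    -- `N` is a norm equivalent to the `L^p` norm:
    (hNtri : ∀ u v, N (u + v) ≤ N u + N v)
    (hNsmul : ∀ (a : ℂ) u, N (a • u) = ‖a‖ * N u)
    (hNequiv : ∃ c₁ c₂ : ℝ, 0 < c₁ ∧ 0 < c₂ ∧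
      ∀ u, c₁ * ‖u‖ ≤ N u ∧ N u ≤ c₂ * ‖u‖)
    (Dom : Submodule ℂ (Lp (EuclideanSpace ℂ (Fin m)) p μ))
    (hdense : Dense (Dom : Set (Lp (EuclideanSpace ℂ (Fin m)) p μ)))
    (D : Lp (EuclideanSpace ℂ (Fin m)) p μ → Lp (EuclideanSpace ℂ (Fin m)) p μ)
    (hDadd : ∀ u ∈ Dom, ∀ v ∈ Dom, D (u + v) = D u + D v)
    (hDsmul : ∀ (a : ℂ), ∀ u ∈ Dom, D (a • u) = a • D u)
    (V : ℝ → Lp (EuclideanSpace ℂ (Fin m)) p μ →L[ℂ]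
      Lp (EuclideanSpace ℂ (Fin m)) p μ)
    (c ω : ℝ) (hc : 1 ≤ c) (hω : 0 ≤ ω)
    (hV0 : V 0 = ContinuousLinearMap.id ℂ _)
    (hVgrp : ∀ s t : ℝ, V (s + t) = (V s).comp (V t))
    (hVcont : ∀ u, Continuous fun t => V t u)
    (hVdom : ∀ t : ℝ, ∀ u ∈ Dom, V t u ∈ Dom)
    (hVderiv : ∀ t : ℝ, ∀ u ∈ Dom,
      HasDerivAt (fun s => V s u) (Complex.I • V t (D u)) t)
    (hVD : ∀ t : ℝ, ∀ u ∈ Dom, V t (D u) = D (V t u))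
    (hVbound : ∀ (t : ℝ) u, N (V t u) ≤ c * Real.exp (ω * |t|) * N u)
    (κ : ℝ) (hκ : 0 < κ)
    (hcomm : ∀ (η : M → ℝ) (L : NNReal), LipschitzWith L η → (∃ C, ∀ x, |η x| ≤ C) →
      ∀ Mη : Lp (EuclideanSpace ℂ (Fin m)) p μ →L[ℂ]
          Lp (EuclideanSpace ℂ (Fin m)) p μ,
        (∀ u, (Mη u : M → EuclideanSpace ℂ (Fin m))
            =ᵐ[μ] fun x => (η x : ℂ) • (u : M → EuclideanSpace ℂ (Fin m)) x) →
        ∀ u ∈ Dom, Mη u ∈ Dom ∧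
          N (Mη (D u) - D (Mη u)) ≤ κ * L * N u ∧
          Mη (Mη (D u)) - (2 : ℂ) • Mη (D (Mη u)) + D (Mη (Mη u)) = 0)
    (K : Set M) (hK : IsClosed K)
    (u : Lp (EuclideanSpace ℂ (Fin m)) p μ)
    (hu : ∀ᵐ x ∂μ, x ∉ K → (u : M → EuclideanSpace ℂ (Fin m)) x = 0)
    (t : ℝ) :
    ∀ᵐ x ∂μ, c * κ * |t| < Metric.infDist x K →
      (V t u : M → EuclideanSpace ℂ (Fin m)) x = 0 := by
  have hNc := FPS.N_cont N hNtri hNequiv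
  have hmeas : Measurable fun x : M => Metric.infDist x K :=
    (Metric.continuous_infDist_pt K).measurable
  have hR : ∀ R : ℕ, ∀ᵐ x ∂μ, c * κ * |t| < min (Metric.infDist x K) R →
      (V t u : M → EuclideanSpace ℂ (Fin m)) x = 0 := by
    intro R
    set η : M → ℝ := fun x => min (Metric.infDist x K) R with hη
    have hηm : Measurable η := hmeas.min measurable_const
    have hηL : LipschitzWith 1 η := (Metric.lipschitz_infDist_pt K).min_const _
    have hηb : ∀ x, |η x| ≤ R := by
      intro x
      rw [abs_of_nonneg (le_min Metric.infDist_nonneg (Nat.cast_nonneg R))]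
      exact min_le_right _ _
    obtain ⟨E, hE⟩ := FPS.exists_mult (μ := μ) (F := EuclideanSpace ℂ (Fin m)) (p := p)
      η hηm R hηb
    have hED := hcomm η 1 hηL ⟨R, hηb⟩ E hE
    simp only [NNReal.coe_one, mul_one] at hED
    have hEu : E u = 0 := by
      apply Lp.ext
      filter_upwards [hE u, hu, Lp.coeFn_zero (EuclideanSpace ℂ (Fin m)) p μ] with x h1 h2 h3
      rw [h1, h3]
      by_cases hx : x ∈ K
      · have : η x = 0 := by
          simp [hη, Metric.infDist_zero_of_mem hx]
        simp [this]
      · simp [h2 hx]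
    have hbound : ∀ n : ℕ, N (E^[n] (V t u)) ≤
        c * Real.exp (ω * |t|) * (c * κ * |t|) ^ n * N u := by
      intro n
      rcases le_total 0 t with ht | ht
      · have := FPS.core N hNc hNtri hNsmul hNequiv Dom hdense D hDadd hDsmul V c ω hc hω hV0
          hVcont hVdom hVderiv hVD hVbound κ hκ.le E hED t ht n u
        rw [FPS.T_of_ker E V u hEu] at this
        rwa [abs_of_nonneg ht]
      · have := FPS.core N hNc hNtri hNsmul hNequiv Dom hdense (fun w => - D w)
          (fun u hu v hv => by simp only [hDadd u hu v hv, neg_add])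
          (fun a u hu => by simp only [hDsmul a u hu, smul_neg])
          (fun s => V (-s)) c ω hc hω (by simpa using hV0)
          (fun u => (hVcont u).comp continuous_neg) (fun s => hVdom (-s))
          (fun s u hu => by
            have := (hVderiv (-s) u hu).scomp s (hasDerivAt_neg s)
            have h2 : HasDerivAt (fun s => V (-s) u) (Complex.I • V (-s) (-D u)) s := by
              simpa [Function.comp_def] using this
            exact h2)
          (fun s u hu => by simp only [map_neg, hVD (-s) u hu])
          (fun s u => by simpa using hVbound (-s) u) κ hκ.le E
          (fun w hw => by
            obtain ⟨h1, h2, h3⟩ := hED w hw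
            refine ⟨h1, ?_, ?_⟩
            · have e : E (-D w) - -D (E w) = (-1 : ℂ) • (E (D w) - D (E w)) := by
                rw [map_neg, neg_smul, one_smul]; abel
              rw [e, hNsmul]
              simpa using h2
            · rw [← neg_eq_zero, ← h3]
              simp only [map_neg, smul_neg]
              abel) (-t) (neg_nonneg.2 ht) n u
        rw [FPS.T_of_ker E (fun s => V (-s)) u hEu] at this
        simpa [abs_of_nonpos ht] using this
    obtain ⟨c₁, c₂, hc1, hc2, hN⟩ := hNequiv
    refine FPS.vanish η hηm E hE (V t u) (c * κ * |t|)
      (c * Real.exp (ω * |t|) * N u / c₁) (by positivity) fun n => ?_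
    rw [div_mul_eq_mul_div, le_div_iff₀ hc1]
    have h1 := (hN (E^[n] (V t u))).1
    have h2 := hbound n
    calc ‖E^[n] (V t u)‖ * c₁ = c₁ * ‖E^[n] (V t u)‖ := mul_comm _ _
      _ ≤ _ := h1.trans h2
      _ = _ := by ring
  filter_upwards [ae_all_iff.2 hR] with x hx hlt
  obtain ⟨R, hRx⟩ := exists_nat_gt (Metric.infDist x K)
  exact hx R (lt_min hlt (hlt.trans hRx))
end

section
/- Let n, N ≥ 1 and write X = L²(ℝⁿ; ℂᴺ). Let D : Dom(D) ⊆ X → X be a densely defined linear operator (a first order system) and let V : ℝ → B(X) be a C₀ group generated by iD satisfying ‖V(t)u‖₂ ≤ c·e^{ω|t|}·‖u‖₂ for all t ∈ ℝ and u ∈ X, for some c ≥ 1 and ω ≥ 0. Suppose there is κ > 0 such that for every bounded real-valued C^∞ function η on ℝⁿ with bounded gradient: η·u ∈ Dom(D) for every u ∈ Dom(D), the commutator [M_η, D]u := η·(Du) − D(η·u) is given by multiplication by a fixed essentially bounded measurable matrix-valued function m_η : ℝⁿ → ℂ^{N×N} (i.e. [M_η,D]u = m_η·u a.e. for all u ∈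 Dom(D)), and ‖[M_η,D]u‖₂ ≤ κ·‖∇η‖_∞·‖u‖₂ for all u ∈ Dom(D). Then the group V has finite propagation speed at most cκ: for every closed set K ⊆ ℝⁿ, every u ∈ X vanishing a.e. outside K, and every t ∈ ℝ, V(t)u vanishes a.e. outside {x ∈ ℝⁿ : dist(x,K) ≤ cκ|t|}. -/
open MeasureTheory Complex

/-- iterated commutators of `M` with `V t` -/
noncomputable def iterComm {X : Type*} [NormedAddCommGroup X] [NormedSpace ℂ X]
    (M : X →L[ℂ] X) (V : ℝ → X →L[ℂ] X) : ℕ → ℝ → X →L[ℂ] X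
  | 0 => V
  | (m + 1) => fun t => M.comp (iterComm M V m t) - (iterComm M V m t).comp M

theorem iterComm_succ_apply {X : Type*} [NormedAddCommGroup X] [NormedSpace ℂ X]
    (M : X →L[ℂ] X) (V : ℝ → X →L[ℂ] X) (m : ℕ) (t : ℝ) (u : X) :
    iterComm M V (m + 1) t u = M (iterComm M V m t u) - iterComm M V m t (M u) := by
  simp [iterComm]

theorem iterComm_bound {X : Type*} [NormedAddCommGroup X] [NormedSpace ℂ X]
    (Dom : Submodule ℂ X) (hdense : Dense (Dom : Set X)) (D : X → X)
    (hDadd : ∀ u ∈ Dom, ∀ v ∈ Dom, D (u + v) = D u + D v)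
    (hDsmul : ∀ (a : ℂ), ∀ u ∈ Dom, D (a • u) = a • D u)
    (V : ℝ → X →L[ℂ] X)
    (c ω : ℝ) (hc : 1 ≤ c) (hω : 0 ≤ ω)
    (hV0 : V 0 = ContinuousLinearMap.id ℂ _)
    (hVcont : ∀ u, Continuous fun t => V t u)
    (hVdom : ∀ t : ℝ, ∀ u ∈ Dom, V t u ∈ Dom)
    (hVderiv : ∀ t : ℝ, ∀ u ∈ Dom,
      HasDerivAt (fun s => V s u) (Complex.I • V t (D u)) t)
    (hVD : ∀ t : ℝ, ∀ u ∈ Dom, V t (D u) = D (V t u))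
    (hVbound : ∀ (t : ℝ) u, ‖V t u‖ ≤ c * Real.exp (ω * |t|) * ‖u‖)
    (b : ℝ) (hb : 0 ≤ b) (M : X →L[ℂ] X) (hMdom : ∀ u ∈ Dom, M u ∈ Dom)
    (hB : ∀ u ∈ Dom, ‖M (D u) - D (M u)‖ ≤ b * ‖u‖)
    (hBM : ∀ u ∈ Dom, M (M (D u) - D (M u)) = M (D (M u)) - D (M (M u)))
    (m : ℕ) (t : ℝ) (ht : 0 ≤ t) (u : X) :
    ‖iterComm M V m t u‖ ≤ c * Real.exp (ω * t) * (c * b * t) ^ m * ‖u‖ := by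
  have hDsub : ∀ u ∈ Dom, ∀ v ∈ Dom, D (u - v) = D u - D v := by
    intro u hu v hv
    have h1 := hDadd u hu ((-1 : ℂ) • v) (Dom.smul_mem _ hv)
    rw [hDsmul _ v hv] at h1
    simpa [sub_eq_add_neg] using h1
  have hdom : ∀ m : ℕ, ∀ s : ℝ, ∀ u ∈ Dom, iterComm M V m s u ∈ Dom := by
    intro m
    induction m with
    | zero => exact hVdom
    | succ m ih =>
      intro s u hu
      rw [iterComm_succ_apply]
      exact Dom.sub_mem (hMdom _ (ih s u hu)) (ih s _ (hMdom u hu))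
  have hder : ∀ m : ℕ, ∀ s : ℝ, ∀ u ∈ Dom, HasDerivAt (fun r => iterComm M V m r u)
      (I • D (iterComm M V m s u) + (m : ℂ) • I • (M (D (iterComm M V (m-1) s u))
        - D (M (iterComm M V (m-1) s u)))) s := by
    intro m
    induction m with
    | zero =>
      intro s u hu
      have := hVderiv s u hu
      rw [hVD s u hu] at this
      simpa [iterComm] using this
    | succ m ih =>
      intro s u hu
      have h1 := ((M.restrictScalars ℝ).hasFDerivAt.comp_hasDerivAt s (ih s u hu)).sub
        (ih s (M u) (hMdom u hu))
      have h2 : (fun r => iterComm M V (m+1) r u) =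
        ((M.restrictScalars ℝ) ∘ (fun r => iterComm M V m r u)) -
          (fun r => iterComm M V m r (M u)) := by
        ext r
        simp [iterComm_succ_apply]
      rw [h2]
      refine h1.congr_deriv ?_
      have d1 := hdom m s u hu
      have d2 := hdom m s (M u) (hMdom u hu)
      rw [iterComm_succ_apply, hDsub _ (hMdom _ d1) _ d2]
      have key : (m : ℂ) • (M (M (D (iterComm M V (m-1) s u)) - D (M (iterComm M V (m-1) s u)))
          - (M (D (iterComm M V (m-1) s (M u))) - D (M (iterComm M V (m-1) s (M u)))))
          = (m : ℂ) • (M (D (iterComm M V m s u)) - D (M (iterComm M V m s u))) := by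
        cases m with
        | zero => simp
        | succ k =>
          have e1 := hdom k s u hu
          have e2 := hdom k s (M u) (hMdom u hu)
          simp only [Nat.add_sub_cancel]
          rw [hBM _ e1, iterComm_succ_apply, hDsub _ (hMdom _ e1) _ e2, map_sub, map_sub,
            hDsub _ (hMdom _ (hMdom _ e1)) _ (hMdom _ e2)]
          congr 1
          abel
      simp only [ContinuousLinearMap.coe_restrictScalars', map_add, map_smul, Nat.add_sub_cancel]
      generalize M (M (D (iterComm M V (m-1) s u)) - D (M (iterComm M V (m-1) s u))) = p at *
      generalize (M (D (iterComm M V (m-1) s (M u))) - D (M (iterComm M V (m-1) s (M u)))) = q at *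
      have key2 : (m : ℂ) • p = (m : ℂ) • q +
        (m : ℂ) • (M (D (iterComm M V m s u)) - D (M (iterComm M V m s u))) := by
        rw [← key]; module
      have key3 : (m : ℂ) • I • p = I • (m : ℂ) • p := smul_comm _ _ _
      rw [key3, key2]
      push_cast
      module
  have hzero : ∀ m : ℕ, ∀ u, iterComm M V (m+1) 0 u = 0 := by
    intro m
    induction m with
    | zero => intro u; simp [iterComm, hV0]
    | succ m ih => intro u; rw [iterComm_succ_apply, ih, ih]; simp
  -- product rule
  have hprod : ∀ (t s : ℝ) (f : ℝ → X) (f' : X), f s ∈ Dom → HasDerivAt f f' s →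
      HasDerivAt (fun r => V (t - r) (f r)) (V (t - s) (f' - I • D (f s))) s := by
    intro t s f f' hf hf'
    have h1 : HasDerivAt (fun r => V (t - r) (f s)) (-(I • V (t - s) (D (f s)))) s := by
      have := (hVderiv (t - s) (f s) hf).scomp s ((hasDerivAt_id s).const_sub t)
      simpa [Function.comp_def] using this
    have h2 : HasDerivAt (fun r => V (t - r) (f r - f s)) (V (t - s) f') s := by
      rw [hasDerivAt_iff_tendsto_slope]
      have h3 : slope (fun r => V (t - r) (f r - f s)) s = fun r => V (t - r) (slope f s r) := by
        ext r
        have := ((V (t - r)).restrictScalars ℝ).map_smul (r - s)⁻¹ (f r - f s)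
        simp only [ContinuousLinearMap.coe_restrictScalars'] at this
        simp [slope, -map_sub, this]
      rw [h3]
      have h4 := hasDerivAt_iff_tendsto_slope.1 hf'
      have h5 : Filter.Tendsto (fun r => V (t - r) f') (nhdsWithin s {s}ᶜ) (nhds (V (t - s) f')) :=
        (((hVcont f').comp (continuous_const.sub continuous_id)).tendsto s).mono_left
          nhdsWithin_le_nhds
      have h6 : Filter.Tendsto (fun r => V (t - r) (slope f s r - f')) (nhdsWithin s {s}ᶜ)
          (nhds 0) := by
        have h7 : Filter.Tendsto (fun r => c * Real.exp (ω * |t - r|) * ‖slope f s r - f'‖)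
            (nhdsWithin s {s}ᶜ) (nhds (c * Real.exp (ω * |t - s|) * 0)) := by
          refine Filter.Tendsto.mul ?_ ?_
          · refine Filter.Tendsto.mono_left (Continuous.tendsto ?_ s) nhdsWithin_le_nhds
            fun_prop
          · exact (tendsto_iff_norm_sub_tendsto_zero).1 h4
        rw [mul_zero] at h7
        exact squeeze_zero_norm (fun r => hVbound _ _) h7
      have h8 := h6.add h5
      simpa [← map_add] using h8
    have h9 := h1.add h2
    refine (h9.congr_deriv ?_).congr_of_eventuallyEq ?_
    · simp only [map_sub, map_smul]; abel
    · refine Filter.Eventually.of_forall fun r => ?_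
      simp
  -- the bound on the domain
  have hbd : ∀ m : ℕ, ∀ t : ℝ, 0 ≤ t → ∀ u ∈ Dom,
      ‖iterComm M V m t u‖ ≤ c * Real.exp (ω * t) * (c * b * t) ^ m * ‖u‖ := by
    intro m
    induction m with
    | zero =>
      intro t ht u hu
      have := hVbound t u
      rw [abs_of_nonneg ht] at this
      simpa [iterComm] using this
    | succ m ih =>
      intro t ht u hu
      have hd : ∀ s, HasDerivAt (fun r => V (t - r) (iterComm M V (m+1) r u))
          (V (t - s) (((m + 1 : ℕ) : ℂ) • I • (M (D (iterComm M V m s u))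
        - D (M (iterComm M V m s u))))) s := by
        intro s
        have := hprod t s _ _ (hdom (m+1) s u hu) (hder (m+1) s u hu)
        simpa only [add_sub_cancel_left, Nat.add_sub_cancel] using this
      have hBd : ∀ s : ℝ, HasDerivAt
          (fun s : ℝ => c * Real.exp (ω * t) * (c * b * s) ^ (m+1) * ‖u‖)
          (c * Real.exp (ω * t) * (((m + 1 : ℕ) : ℝ) * (c * b * s) ^ m * (c * b)) * ‖u‖) s := by
        intro s
        have h1 : HasDerivAt (fun s : ℝ => c * b * s) (c * b) s := by
          simpa using (hasDerivAt_id s).const_mul (c * b)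
        have := ((h1.pow (m+1)).const_mul (c * Real.exp (ω * t))).mul_const ‖u‖
        simpa using this
      have := image_norm_le_of_norm_deriv_right_le_deriv_boundary (a := 0) (b := t)
        (f := fun r => V (t - r) (iterComm M V (m+1) r u))
        (fun s _ => (hd s).continuousAt.continuousWithinAt)
        (fun s _ => (hd s).hasDerivWithinAt) (by simp [hzero]) hBd ?_ (Set.right_mem_Icc.2 ht)
      · simpa [hV0] using this
      · intro s hs
        refine (hVbound _ _).trans ?_
        rw [abs_of_nonneg (by linarith [hs.2]), norm_smul, norm_smul]
        simp only [Complex.norm_natCast, Complex.norm_I, one_mul]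
        have h1 := hB _ (hdom m s u hu)
        have h2 := ih s hs.1 u hu
        have h3 : ‖M (D (iterComm M V m s u)) - D (M (iterComm M V m s u))‖ ≤
          b * (c * Real.exp (ω * s) * (c * b * s) ^ m * ‖u‖) := h1.trans (by gcongr)
        calc _ ≤ c * Real.exp (ω * (t - s)) * (((m + 1 : ℕ) : ℝ) *
              (b * (c * Real.exp (ω * s) * (c * b * s) ^ m * ‖u‖))) := by gcongr
          _ = _ := by
            have : Real.exp (ω * t) = Real.exp (ω * (t - s)) * Real.exp (ω * s) := by
              rw [← Real.exp_add]; ring_nf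
            rw [this]; ring
  refine hdense.induction (P := fun u => ‖iterComm M V m t u‖ ≤ c * Real.exp (ω * t) * (c * b * t) ^ m * ‖u‖) (fun u hu => hbd m t ht u hu) ?_ u
  exact isClosed_le (by fun_prop) (by fun_prop)

theorem pow_apply_bound {X : Type*} [NormedAddCommGroup X] [NormedSpace ℂ X]
    (Dom : Submodule ℂ X) (hdense : Dense (Dom : Set X)) (D : X → X)
    (hDadd : ∀ u ∈ Dom, ∀ v ∈ Dom, D (u + v) = D u + D v)
    (hDsmul : ∀ (a : ℂ), ∀ u ∈ Dom, D (a • u) = a • D u)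
    (V : ℝ → X →L[ℂ] X)
    (c ω : ℝ) (hc : 1 ≤ c) (hω : 0 ≤ ω)
    (hV0 : V 0 = ContinuousLinearMap.id ℂ _)
    (hVcont : ∀ u, Continuous fun t => V t u)
    (hVdom : ∀ t : ℝ, ∀ u ∈ Dom, V t u ∈ Dom)
    (hVderiv : ∀ t : ℝ, ∀ u ∈ Dom,
      HasDerivAt (fun s => V s u) (Complex.I • V t (D u)) t)
    (hVD : ∀ t : ℝ, ∀ u ∈ Dom, V t (D u) = D (V t u))
    (hVbound : ∀ (t : ℝ) u, ‖V t u‖ ≤ c * Real.exp (ω * |t|) * ‖u‖)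
    (b : ℝ) (hb : 0 ≤ b) (M : X →L[ℂ] X) (hMdom : ∀ u ∈ Dom, M u ∈ Dom)
    (hB : ∀ u ∈ Dom, ‖M (D u) - D (M u)‖ ≤ b * ‖u‖)
    (hBM : ∀ u ∈ Dom, M (M (D u) - D (M u)) = M (D (M u)) - D (M (M u)))
    (m : ℕ) (t : ℝ) (u : X) (hu : M u = 0) :
    ‖(M ^ m) (V t u)‖ ≤ c * Real.exp (ω * |t|) * (c * b * |t|) ^ m * ‖u‖ := by
  have hcomm : ∀ (W : ℝ → X →L[ℂ] X) (t : ℝ) (m : ℕ), iterComm M W m t u = (M ^ m) (W t u) := by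
    intro W t m
    induction m with
    | zero => simp [iterComm]
    | succ m ih => rw [iterComm_succ_apply, hu, ih, pow_succ']; simp
  rcases le_total 0 t with ht | ht
  · rw [abs_of_nonneg ht, ← hcomm]
    exact iterComm_bound Dom hdense D hDadd hDsmul V c ω hc hω hV0 hVcont hVdom hVderiv hVD
      hVbound b hb M hMdom hB hBM m t ht u
  · have h := iterComm_bound Dom hdense (fun u => - D u)
      (fun u hu v hv => by rw [hDadd u hu v hv]; abel)
      (fun a u hu => by rw [hDsmul a u hu, smul_neg]) (fun t => V (-t)) c ω hc hω (by simp [hV0])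
      (fun u => (hVcont u).comp continuous_neg) (fun t => hVdom (-t))
      (fun t u hu => by
        have := (hVderiv (-t) u hu).scomp t (hasDerivAt_neg t)
        simpa [Function.comp_def] using this)
      (fun t u hu => by rw [map_neg, hVD _ u hu])
      (fun t u => by simpa using hVbound (-t) u) b hb M hMdom
      (fun u hu => by
        have := hB u hu
        rw [← norm_neg] at this
        have e : M (-D u) - -D (M u) = -(M (D u) - D (M u)) := by rw [map_neg]; abel
        rw [e]; exact this)
      (fun u hu => by
        have := congrArg Neg.neg (hBM u hu)
        simp only [map_neg, map_sub] at this ⊢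
        convert this using 1 <;> abel) m (-t) (by linarith) u
    rw [hcomm] at h
    rw [abs_of_nonpos ht]
    simpa using h

theorem exists_smooth_cutoff {n : ℕ} (K : Set (EuclideanSpace ℝ (Fin n))) (ε R : ℝ)
    (hε : 0 < ε) (hR : 0 ≤ R) :
    ∃ η : EuclideanSpace ℝ (Fin n) → ℝ, ContDiff ℝ (⊤ : ℕ∞) η ∧ (∃ C, ∀ x, |η x| ≤ C) ∧
      (∀ x, ‖fderiv ℝ η x‖ ≤ 1) ∧ (∀ x ∈ K, η x = 0) ∧
      ∀ x, min (Metric.infDist x K) R - 2 * ε ≤ η x := by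
  set g : EuclideanSpace ℝ (Fin n) → ℝ := fun x => max (min (Metric.infDist x K) R - ε) 0 with hg
  have hgL : LipschitzWith 1 g := by
    have h1 := ((Metric.lipschitz_infDist_pt K).min_const R)
    have h2 : LipschitzWith 1 (fun x => min (Metric.infDist x K) R - ε) := by
      refine LipschitzWith.of_dist_le_mul fun x y => ?_
      have := h1.dist_le_mul x y
      simpa [Real.dist_eq] using this
    exact h2.max_const 0
  have hgd : ∀ x y, |g x - g y| ≤ dist x y := fun x y => by
    simpa [Real.dist_eq] using hgL.dist_le_mul x y
  have hg0 : ∀ x, 0 ≤ g x := fun x => le_max_right _ _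
  have hgR : ∀ x, g x ≤ R := fun x => max_le (by linarith [min_le_right (Metric.infDist x K) R]) hR
  have hgc : Continuous g := hgL.continuous
  let φ : ContDiffBump (0 : EuclideanSpace ℝ (Fin n)) := ⟨ε / 2, ε, by linarith, by linarith⟩
  set η : EuclideanSpace ℝ (Fin n) → ℝ :=
    convolution (φ.normed volume) g (ContinuousLinearMap.lsmul ℝ ℝ) volume with hη
  have hdist : ∀ x, |η x - g x| ≤ ε := by
    intro x
    rw [← Real.dist_eq]
    refine φ.dist_normed_convolution_le hgc.aestronglyMeasurable ?_
    intro y hy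
    rw [Real.dist_eq]
    exact (hgd y x).trans (le_of_lt hy)
  have hsupp : HasCompactSupport (φ.normed volume) := φ.hasCompactSupport_normed
  have hint : ∀ x, Integrable (fun z => φ.normed volume z * g (x - z)) volume := by
    intro x
    refine Continuous.integrable_of_hasCompactSupport ?_ hsupp.mul_right
    exact φ.continuous_normed.mul (by fun_prop)
  have hL : LipschitzWith 1 η := by
    refine LipschitzWith.of_dist_le_mul fun x y => ?_
    rw [Real.dist_eq, hη, convolution_lsmul, convolution_lsmul]
    simp only [smul_eq_mul]
    rw [← integral_sub (hint x) (hint y)]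
    have h1 : ∫ z, φ.normed volume z * dist x y = dist x y := by
      rw [integral_mul_const, φ.integral_normed, one_mul]
    simp only [NNReal.coe_one, one_mul]
    rw [← h1, ← Real.norm_eq_abs]
    refine norm_integral_le_of_norm_le ?_ (Filter.Eventually.of_forall fun z => ?_)
    · exact φ.integrable_normed.mul_const _
    · rw [← mul_sub, norm_mul, Real.norm_eq_abs, Real.norm_eq_abs, abs_of_nonneg (φ.nonneg_normed z)]
      refine mul_le_mul_of_nonneg_left ?_ (φ.nonneg_normed z)
      simpa using hgd (x - z) (y - z)
  refine ⟨η, ?_, ⟨R + ε, ?_⟩, ?_, ?_, ?_⟩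
  · exact hsupp.contDiff_convolution_left _ φ.contDiff_normed hgc.locallyIntegrable
  · intro x
    have := abs_le.1 (hdist x)
    rw [abs_le]
    constructor <;> linarith [hg0 x, hgR x]
  · intro x
    simpa using norm_fderiv_le_of_lipschitz ℝ (x₀ := x) hL
  · intro x hx
    have hz : ∀ y ∈ Metric.ball x ε, g y = 0 := by
      intro y hy
      have h1 := Metric.infDist_le_dist_of_mem (x := y) hx
      have h2 : dist y x < ε := hy
      refine max_eq_right ?_
      linarith [min_le_left (Metric.infDist y K) R]
    have hx0 := hz x (Metric.mem_ball_self hε)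
    have := φ.normed_convolution_eq_right (μ := volume) (g := g) (x₀ := x) (fun y hy => by
      rw [hz y hy, hx0])
    exact this.trans hx0
  · intro x
    have := abs_le.1 (hdist x)
    have h2 : min (Metric.infDist x K) R - ε ≤ g x := le_max_left _ _
    linarith

theorem exists_mul_clm {n N : ℕ} (η : EuclideanSpace ℝ (Fin n) → ℝ) (hη : Continuous η)
    (hb : ∃ C, ∀ x, |η x| ≤ C) :
    ∃ M : Lp (EuclideanSpace ℂ (Fin N)) 2
          (volume : Measure (EuclideanSpace ℝ (Fin n))) →L[ℂ]
          Lp (EuclideanSpace ℂ (Fin N)) 2 (volume : Measure (EuclideanSpace ℝ (Fin n))),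
        (∀ u, (M u : EuclideanSpace ℝ (Fin n) → EuclideanSpace ℂ (Fin N))
            =ᵐ[volume] fun x => (η x : ℂ) •
              (u : EuclideanSpace ℝ (Fin n) → EuclideanSpace ℂ (Fin N)) x) := by
  obtain ⟨C, hC⟩ := hb
  have hm : MemLp (fun x => (η x : ℂ)) ⊤ (volume : Measure (EuclideanSpace ℝ (Fin n))) :=
    memLp_top_of_bound (by fun_prop) C (Filter.Eventually.of_forall fun x => by simpa using hC x)
  refine ⟨(ContinuousLinearMap.lsmul ℂ ℂ).holderL volume ⊤ 2 2 hm.toLp, fun u => ?_⟩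
  have h := (ContinuousLinearMap.lsmul ℂ ℂ).coeFn_holder (r := 2) hm.toLp u
  filter_upwards [h, hm.coeFn_toLp] with x h1 h2
  rw [h2] at h1
  exact h1

theorem vanish_of_pow_bound {n N : ℕ} (η : EuclideanSpace ℝ (Fin n) → ℝ) (hη : Continuous η)
    (M : Lp (EuclideanSpace ℂ (Fin N)) 2
          (volume : Measure (EuclideanSpace ℝ (Fin n))) →L[ℂ]
          Lp (EuclideanSpace ℂ (Fin N)) 2 (volume : Measure (EuclideanSpace ℝ (Fin n))))
    (hM : ∀ u, (M u : EuclideanSpace ℝ (Fin n) → EuclideanSpace ℂ (Fin N))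
            =ᵐ[volume] fun x => (η x : ℂ) •
              (u : EuclideanSpace ℝ (Fin n) → EuclideanSpace ℂ (Fin N)) x)
    (w : Lp (EuclideanSpace ℂ (Fin N)) 2 (volume : Measure (EuclideanSpace ℝ (Fin n))))
    (r C : ℝ) (hr : 0 ≤ r) (hw : ∀ m : ℕ, ‖(M ^ m) w‖ ≤ C * r ^ m) :
    ∀ᵐ x ∂(volume : Measure (EuclideanSpace ℝ (Fin n))), r < η x →
      (w : EuclideanSpace ℝ (Fin n) → EuclideanSpace ℂ (Fin N)) x = 0 := by
  have hpow : ∀ m : ℕ, ((M ^ m) w : EuclideanSpace ℝ (Fin n) → EuclideanSpace ℂ (Fin N))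
      =ᵐ[volume] fun x => ((η x : ℂ) ^ m) • w x := by
    intro m
    induction m with
    | zero => simp
    | succ m ih =>
      rw [pow_succ']
      filter_upwards [hM ((M ^ m) w), ih] with x h1 h2
      rw [mul_apply_eq_comp, h1, h2, smul_smul, pow_succ']
  have main : ∀ a : ℝ, r < a → ∀ᵐ x ∂(volume : Measure (EuclideanSpace ℝ (Fin n))), a ≤ η x →
      (w : EuclideanSpace ℝ (Fin n) → EuclideanSpace ℂ (Fin N)) x = 0 := by
    intro a ha
    have ha0 : 0 < a := hr.trans_lt ha
    have hS : MeasurableSet {x | a ≤ η x} := (isClosed_le continuous_const hη).measurableSet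
    set S := {x | a ≤ η x} with hSdef
    have hmem : MemLp (S.indicator w) 2 volume := (Lp.memLp w).indicator hS
    have hle : ∀ m : ℕ, ‖hmem.toLp‖ ≤ C * (r / a) ^ m := by
      intro m
      have h1 : ‖hmem.toLp‖ ≤ (a ^ m)⁻¹ * ‖(M ^ m) w‖ := by
        refine Lp.norm_le_mul_norm_of_ae_le_mul ?_
        filter_upwards [hmem.coeFn_toLp, hpow m] with x h1 h2
        rw [h1, h2, norm_smul, norm_pow, Complex.norm_real, Real.norm_eq_abs]
        by_cases hx : x ∈ S
        · rw [Set.indicator_of_mem hx, ← mul_assoc]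
          have h3 : a ^ m ≤ |η x| ^ m := by
            gcongr
            exact le_trans hx (le_abs_self _)
          have h4 : 1 ≤ (a ^ m)⁻¹ * |η x| ^ m := by
            rw [inv_mul_eq_div, one_le_div (by positivity)]; exact h3
          exact le_mul_of_one_le_left (norm_nonneg _) h4
        · rw [Set.indicator_of_notMem hx, norm_zero]; positivity
      calc _ ≤ _ := h1
        _ ≤ (a ^ m)⁻¹ * (C * r ^ m) := by gcongr; exact hw m
        _ = _ := by rw [div_pow]; ring
    have hlim : Filter.Tendsto (fun m : ℕ => C * (r / a) ^ m) Filter.atTop (nhds (C * 0)) :=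
      (tendsto_pow_atTop_nhds_zero_of_lt_one (by positivity) ((div_lt_one ha0).2 ha)).const_mul C
    rw [mul_zero] at hlim
    have h0 : hmem.toLp = 0 := norm_le_zero_iff.1 (ge_of_tendsto' hlim hle)
    have h5 := hmem.coeFn_toLp
    rw [h0] at h5
    filter_upwards [h5, Lp.coeFn_zero (EuclideanSpace ℂ (Fin N)) 2 volume] with x h6 h7 hx
    rw [h7, Set.indicator_of_mem (show x ∈ S from hx)] at h6
    exact h6.symm
  have hall := ae_all_iff.2 (fun k : ℕ => main (r + 1 / ((k : ℝ) + 1)) (by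
    have : 0 < 1 / ((k : ℝ) + 1) := by positivity
    linarith))
  filter_upwards [hall] with x hx hlt
  obtain ⟨k, hk⟩ := exists_nat_one_div_lt (sub_pos.2 hlt)
  exact hx k (by linarith)

/-- **Finite propagation speed for first order systems on `ℝⁿ`**
(McIntosh–Morris, Theorem 1 for systems on `L²(ℝⁿ, ℂᴺ)`). -/
theorem finite_propagation_speed_first_order_system
    (n N : ℕ) (hn : 1 ≤ n) (hN : 1 ≤ N)
    (Dom : Submodule ℂ (Lp (EuclideanSpace ℂ (Fin N)) 2
      (volume : Measure (EuclideanSpace ℝ (Fin n)))))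
    (hdense : Dense (Dom : Set (Lp (EuclideanSpace ℂ (Fin N)) 2
      (volume : Measure (EuclideanSpace ℝ (Fin n))))))
    (D : Lp (EuclideanSpace ℂ (Fin N)) 2 (volume : Measure (EuclideanSpace ℝ (Fin n))) →
      Lp (EuclideanSpace ℂ (Fin N)) 2 (volume : Measure (EuclideanSpace ℝ (Fin n))))
    (hDadd : ∀ u ∈ Dom, ∀ v ∈ Dom, D (u + v) = D u + D v)
    (hDsmul : ∀ (a : ℂ), ∀ u ∈ Dom, D (a • u) = a • D u)
    (V : ℝ → Lp (EuclideanSpace ℂ (Fin N)) 2 (volume : Measure (EuclideanSpace ℝ (Fin n))) →L[ℂ]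
      Lp (EuclideanSpace ℂ (Fin N)) 2 (volume : Measure (EuclideanSpace ℝ (Fin n))))
    (c ω : ℝ) (hc : 1 ≤ c) (hω : 0 ≤ ω)
    (hV0 : V 0 = ContinuousLinearMap.id ℂ _)
    (hVgrp : ∀ s t : ℝ, V (s + t) = (V s).comp (V t))
    (hVcont : ∀ u, Continuous fun t => V t u)
    (hVdom : ∀ t : ℝ, ∀ u ∈ Dom, V t u ∈ Dom)
    (hVderiv : ∀ t : ℝ, ∀ u ∈ Dom,
      HasDerivAt (fun s => V s u) (Complex.I • V t (D u)) t)
    (hVD : ∀ t : ℝ, ∀ u ∈ Dom, V t (D u) = D (V t u))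
    (hVbound : ∀ (t : ℝ) u, ‖V t u‖ ≤ c * Real.exp (ω * |t|) * ‖u‖)
    (κ : ℝ) (hκ : 0 < κ)
    (hcomm : ∀ (η : EuclideanSpace ℝ (Fin n) → ℝ), ContDiff ℝ (⊤ : ℕ∞) η →
      (∃ C, ∀ x, |η x| ≤ C) → (∃ G, ∀ x, ‖fderiv ℝ η x‖ ≤ G) →
      ∀ Mη : Lp (EuclideanSpace ℂ (Fin N)) 2
          (volume : Measure (EuclideanSpace ℝ (Fin n))) →L[ℂ]
          Lp (EuclideanSpace ℂ (Fin N)) 2 (volume : Measure (EuclideanSpace ℝ (Fin n))),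
        (∀ u, (Mη u : EuclideanSpace ℝ (Fin n) → EuclideanSpace ℂ (Fin N))
            =ᵐ[volume] fun x => (η x : ℂ) •
              (u : EuclideanSpace ℝ (Fin n) → EuclideanSpace ℂ (Fin N)) x) →
        (∀ u ∈ Dom, Mη u ∈ Dom) ∧
        (∃ mη : EuclideanSpace ℝ (Fin n) → Matrix (Fin N) (Fin N) ℂ,
          AEStronglyMeasurable (fun x => Matrix.toEuclideanCLM (𝕜 := ℂ) (mη x)) volume ∧
          (∃ Cm, ∀ᵐ x ∂(volume : Measure (EuclideanSpace ℝ (Fin n))),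
            ‖Matrix.toEuclideanCLM (𝕜 := ℂ) (mη x)‖ ≤ Cm) ∧
          ∀ u ∈ Dom,
            ((Mη (D u) - D (Mη u) : Lp (EuclideanSpace ℂ (Fin N)) 2
                (volume : Measure (EuclideanSpace ℝ (Fin n)))) :
              EuclideanSpace ℝ (Fin n) → EuclideanSpace ℂ (Fin N))
            =ᵐ[volume] fun x => Matrix.toEuclideanCLM (𝕜 := ℂ) (mη x)
              ((u : EuclideanSpace ℝ (Fin n) → EuclideanSpace ℂ (Fin N)) x)) ∧
        (∀ u ∈ Dom, ∀ G : ℝ, (∀ x, ‖fderiv ℝ η x‖ ≤ G) →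
          ‖Mη (D u) - D (Mη u)‖ ≤ κ * G * ‖u‖))
    (K : Set (EuclideanSpace ℝ (Fin n))) (hK : IsClosed K)
    (u : Lp (EuclideanSpace ℂ (Fin N)) 2 (volume : Measure (EuclideanSpace ℝ (Fin n))))
    (hu : ∀ᵐ x ∂(volume : Measure (EuclideanSpace ℝ (Fin n))), x ∉ K →
      (u : EuclideanSpace ℝ (Fin n) → EuclideanSpace ℂ (Fin N)) x = 0)
    (t : ℝ) :
    ∀ᵐ x ∂(volume : Measure (EuclideanSpace ℝ (Fin n))), c * κ * |t| < Metric.infDist x K →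
      (V t u : EuclideanSpace ℝ (Fin n) → EuclideanSpace ℂ (Fin N)) x = 0 := by
  have main : ∀ k : ℕ, ∃ η : EuclideanSpace ℝ (Fin n) → ℝ,
      (∀ x, min (Metric.infDist x K) (k : ℝ) - 2 * (1 / ((k : ℝ) + 1)) ≤ η x) ∧
      ∀ᵐ x ∂(volume : Measure (EuclideanSpace ℝ (Fin n))), c * κ * |t| < η x →
      (V t u : EuclideanSpace ℝ (Fin n) → EuclideanSpace ℂ (Fin N)) x = 0 := by
    intro k
    obtain ⟨η, hsm, hbd, hgrad, hzero, hlow⟩ := exists_smooth_cutoff K (1 / ((k : ℝ) + 1)) (k : ℝ)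
      (by positivity) (by positivity)
    refine ⟨η, hlow, ?_⟩
    obtain ⟨M, hM⟩ := exists_mul_clm (N := N) η hsm.continuous hbd
    obtain ⟨hMdom, ⟨mη, -, -, hmη⟩, hnorm⟩ := hcomm η hsm hbd ⟨1, hgrad⟩ M hM
    have hMu : M u = 0 := by
      rw [Lp.eq_zero_iff_ae_eq_zero]
      filter_upwards [hM u, hu] with x h1 h2
      rw [h1]
      by_cases hx : x ∈ K
      · simp [hzero x hx]
      · simp [h2 hx]
    have hBM : ∀ v ∈ Dom, M (M (D v) - D (M v)) = M (D (M v)) - D (M (M v)) := by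
      intro v hv
      refine Lp.ext ?_
      filter_upwards [hM (M (D v) - D (M v)), hmη v hv, hmη (M v) (hMdom v hv), hM v]
        with x h1 h2 h3 h4
      rw [h1, h2, h3, h4, map_smul]
    refine vanish_of_pow_bound η hsm.continuous M hM (V t u) (c * κ * |t|)
      (c * Real.exp (ω * |t|) * ‖u‖) (by positivity) (fun m => ?_)
    have h := pow_apply_bound Dom hdense D hDadd hDsmul V c ω hc hω hV0 hVcont hVdom hVderiv hVD
      hVbound κ hκ.le M hMdom (fun v hv => by simpa using hnorm v hv 1 hgrad) hBM m t u hMu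
    calc _ ≤ _ := h
      _ = _ := by ring
  choose η hlow hη using main
  filter_upwards [ae_all_iff.2 hη] with x hx hlt
  have hlim : Filter.Tendsto (fun k : ℕ => Metric.infDist x K - 2 * (1 / ((k : ℝ) + 1)))
      Filter.atTop (nhds (Metric.infDist x K - 2 * 0)) :=
    tendsto_const_nhds.sub (tendsto_one_div_add_atTop_nhds_zero_nat.const_mul 2)
  rw [mul_zero, sub_zero] at hlim
  obtain ⟨k, hk1, hk2⟩ := ((hlim.eventually_const_lt hlt).and
    (tendsto_natCast_atTop_atTop.eventually_ge_atTop (Metric.infDist x K))).exists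
  have h := hlow k x
  rw [min_eq_left hk2] at h
  exact hx k (by linarith)
end

section
/- Let (M,d) be a metric space with a σ-finite Borel measure μ, let m ≥ 1, 1 ≤ p < ∞, and write X = L^p(μ;ℂ^m). Let D : Dom(D) ⊆ X → X be a densely defined linear operator and let V : ℝ → B(X) be a C₀ group generated by iD. Let η : M → ℝ be a bounded Lipschitz function such that η·u ∈ Dom(D) for all u ∈ Dom(D), and suppose C_η ∈ B(X) satisfies C_η u = η·(Du) − D(η·u) for all u ∈ Dom(D) and commutes with M_η (i.e. η·(C_η u) = C_η(η·u) for all u ∈ X). Define δ(S) := M_η S − S M_η for S ∈ B(X), δ⁰(S) := S, δ^{k+1}(S) := δ(δᵏ(S)). Then for every m₀ ∈ ℕ (m₀ ≥ 0), every t ∈ ℝ, and every u ∈ X, δ^{m₀+1}(V(t))u = i·t·∫₀¹ Σ_{k=0}^{m₀} binom(m₀,k) · δ^{m₀−k}(V(st)) C_η δ^k(V((1−s)t)) u ds, where the integral is a Bochner integral in X over s ∈ [0,1]. -/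
open MeasureTheory Complex

section Helpers

open Filter Topology

theorem hcf_leibniz {R : Type*} [Ring R] (M C : R) (hMC : M * C = C * M) (A B : R) (n : ℕ) :
    (fun T => M * T - T * M)^[n] (A * C * B) =
      ∑ ij ∈ Finset.HasAntidiagonal.antidiagonal n, n.choose ij.1 •
        ((fun T => M * T - T * M)^[ij.2] A * C * (fun T => M * T - T * M)^[ij.1] B) := by
  induction n with
  | zero => simp
  | succ n ih =>
    rw [Finset.sum_antidiagonal_choose_succ_nsmul
      (fun i j => (fun T => M * T - T * M)^[j] A * C * (fun T => M * T - T * M)^[i] B) n,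
      Function.iterate_succ_apply', ih]
    simp only [Function.iterate_succ_apply', Finset.mul_sum, Finset.sum_mul]
    rw [← Finset.sum_sub_distrib, ← Finset.sum_add_distrib]
    refine Finset.sum_congr rfl fun ⟨i, j⟩ hij => ?_
    rw [← n.choose_symm_of_eq_add (Finset.HasAntidiagonal.mem_antidiagonal.1 hij).symm]
    simp only [mul_smul_comm, smul_mul_assoc]
    rw [← smul_sub, ← smul_add]
    congr 1
    generalize (fun T => M * T - T * M)^[j] A = a
    generalize (fun T => M * T - T * M)^[i] B = b
    have h : a * C * (M * b) = a * M * C * b := by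
      rw [mul_assoc a M C, hMC]; noncomm_ring
    rw [mul_sub, h]
    noncomm_ring

variable {X : Type*} [NormedAddCommGroup X] [NormedSpace ℂ X] [NormedSpace ℝ X]
  [IsScalarTower ℝ ℂ X] [CompleteSpace X]

theorem hcf_mul_apply {Y : Type*} [NormedAddCommGroup Y] [NormedSpace ℂ Y]
    (A B : Y →L[ℂ] Y) (u : Y) : (A * B) u = A (B u) := rfl

theorem hcf_bound (F : ℝ → X →L[ℂ] X) (hF : ∀ u, Continuous fun s => F s u) (a b : ℝ) :
    ∃ K, ∀ s ∈ Set.Icc a b, ‖F s‖ ≤ K := by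
  have := banach_steinhaus (g := fun s : Set.Icc a b => F s) (fun x => by
    obtain ⟨K, hK⟩ := (isCompact_Icc (a := a) (b := b)).exists_bound_of_continuousOn
      (hF x).continuousOn
    exact ⟨K, fun i => hK i i.2⟩)
  obtain ⟨K, hK⟩ := this
  exact ⟨K, fun s hs => hK ⟨s, hs⟩⟩

theorem hcf_tendsto (F : ℝ → X →L[ℂ] X) (hF : ∀ u, Continuous fun s => F s u)
    {ι : Type*} {l : Filter ι} {f : ι → ℝ} {g : ι → X} {s : ℝ} {x : X}
    (hf : Tendsto f l (𝓝 s)) (hg : Tendsto g l (𝓝 x)) :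
    Tendsto (fun i => F (f i) (g i)) l (𝓝 (F s x)) := by
  obtain ⟨K, hK⟩ := hcf_bound F hF (s - 1) (s + 1)
  have h1 : Tendsto (fun i => F (f i) (g i - x)) l (𝓝 0) := by
    have h0 : Tendsto (fun i => K * ‖g i - x‖) l (𝓝 0) := by
      have : Tendsto (fun i => ‖g i - x‖) l (𝓝 0) := tendsto_iff_norm_sub_tendsto_zero.1 hg
      simpa using this.const_mul K
    refine squeeze_zero_norm' ?_ h0
    have : ∀ᶠ i in l, f i ∈ Set.Icc (s - 1) (s + 1) :=
      hf (Icc_mem_nhds (by linarith) (by linarith))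
    filter_upwards [this] with i hi
    exact (F (f i)).le_of_opNorm_le (hK _ hi) _
  have h2 : Tendsto (fun i => F (f i) x) l (𝓝 (F s x)) := ((hF x).tendsto s).comp hf
  simpa using h1.add h2

theorem hcf_deriv (F : ℝ → X →L[ℂ] X) (hF : ∀ u, Continuous fun s => F s u)
    (g : ℝ → X) (g' w : X) (s : ℝ) (hg : HasDerivAt g g' s)
    (hw : HasDerivAt (fun r => F r (g s)) w s) :
    HasDerivAt (fun r => F r (g r)) (F s g' + w) s := by
  rw [hasDerivAt_iff_tendsto_slope] at *
  have h1 := hcf_tendsto F hF (l := 𝓝[≠] s) (f := id) (s := s) (tendsto_id.mono_left nhdsWithin_le_nhds) hg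
  refine (h1.add hw).congr fun r => ?_
  have : ∀ (c : ℝ) (y : X), F r (c • y) = c • F r y := fun c y =>
    (F r).map_smul_of_tower c y
  simp only [slope_def_module, id, this, ← smul_add, map_sub]
  congr 1
  abel

theorem hcf_iterate (M : X →L[ℂ] X) (c : ℂ) (n : ℕ) : ∀ (S : X →L[ℂ] X) (F : ℝ → X →L[ℂ] X)
    (_ : ∀ u, Continuous fun s => F s u) (_ : ∀ u, S u = c • ∫ s in (0:ℝ)..1, F s u) (u : X),
    ((fun T => M * T - T * M)^[n] S) u =
      c • ∫ s in (0:ℝ)..1, ((fun T => M * T - T * M)^[n] (F s)) u := by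
  induction n with
  | zero => intro S F _ h u; exact h u
  | succ n ih =>
    intro S F hF h u
    simp only [Function.iterate_succ_apply]
    refine ih _ (fun s => M * F s - F s * M) (fun u => ?_) (fun u => ?_) u
    · exact (M.continuous.comp (hF u)).sub (hF (M u))
    · have h1 := M.intervalIntegral_comp_comm ((hF u).intervalIntegrable (μ := volume) 0 1)
      have h2 := intervalIntegral.integral_sub
        ((M.continuous.comp (hF u)).intervalIntegrable (μ := volume) 0 1)
        ((hF (M u)).intervalIntegrable (μ := volume) 0 1)
      simp only [_root_.sub_apply, hcf_mul_apply, h, map_smul]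
      simp only [Function.comp_def] at h2
      rw [h2, h1, smul_sub]

theorem hcf_base (Dom : Submodule ℂ X) (hdense : Dense (Dom : Set X)) (D : X → X)
    (V : ℝ → X →L[ℂ] X)
    (hV0 : V 0 = ContinuousLinearMap.id ℂ _)
    (hVcont : ∀ u, Continuous fun t => V t u)
    (hVdom : ∀ t : ℝ, ∀ u ∈ Dom, V t u ∈ Dom)
    (hVderiv : ∀ t : ℝ, ∀ u ∈ Dom,
      HasDerivAt (fun s => V s u) (Complex.I • V t (D u)) t)
    (hVD : ∀ t : ℝ, ∀ u ∈ Dom, V t (D u) = D (V t u))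
    (M C : X →L[ℂ] X) (hM : ∀ u ∈ Dom, M u ∈ Dom)
    (hC : ∀ u ∈ Dom, C u = M (D u) - D (M u)) (t : ℝ) :
    (∀ u, Continuous fun s : ℝ => (V (s * t) * C * V ((1 - s) * t)) u) ∧
    ∀ u, (M * V t - V t * M) u =
      (Complex.I * (t : ℂ)) • ∫ s in (0:ℝ)..1, (V (s * t) * C * V ((1 - s) * t)) u := by
  have hc : ∀ u, Continuous fun s : ℝ => (V (s * t) * C * V ((1 - s) * t)) u := by
    intro u
    have h1 : Continuous fun s : ℝ => C (V ((1 - s) * t) u) :=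
      C.continuous.comp ((hVcont u).comp (by fun_prop : Continuous fun s : ℝ => (1 - s) * t))
    refine continuous_iff_continuousAt.2 fun s => ?_
    exact hcf_tendsto V hVcont
      ((by fun_prop : Continuous fun s : ℝ => s * t).tendsto s) (h1.tendsto s)
  refine ⟨hc, ?_⟩
  obtain ⟨K, hK⟩ := hcf_bound _ hc 0 1
  have hint : Continuous fun u => ∫ s in (0:ℝ)..1, (V (s * t) * C * V ((1 - s) * t)) u := by
    have hl : LipschitzWith K.toNNReal
        fun u => ∫ s in (0:ℝ)..1, (V (s * t) * C * V ((1 - s) * t)) u := by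
      refine LipschitzWith.of_dist_le' fun u v => ?_
      rw [dist_eq_norm, dist_eq_norm, ← intervalIntegral.integral_sub
        ((hc u).intervalIntegrable 0 1) ((hc v).intervalIntegrable 0 1)]
      have := intervalIntegral.norm_integral_le_of_norm_le_const (a := (0:ℝ)) (b := 1)
        (C := K * ‖u - v‖)
        (f := fun s => (V (s * t) * C * V ((1 - s) * t)) u - (V (s * t) * C * V ((1 - s) * t)) v)
        (fun s hs => by
          rw [Set.uIoc_of_le zero_le_one] at hs
          rw [← map_sub]
          exact ContinuousLinearMap.le_of_opNorm_le _ (hK s ⟨hs.1.le, hs.2⟩) _)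
      simpa using this
    exact hl.continuous
  have key : (fun u => (M * V t - V t * M) u) = fun u =>
      (Complex.I * (t : ℂ)) • ∫ s in (0:ℝ)..1, (V (s * t) * C * V ((1 - s) * t)) u := by
    refine Continuous.ext_on hdense (ContinuousLinearMap.continuous _) (hint.const_smul _) ?_
    intro u hu
    have hu : u ∈ Dom := hu
    have hd : ∀ s : ℝ, HasDerivAt (fun s : ℝ => V (s * t) (M (V ((1 - s) * t) u)))
        (-((Complex.I * (t : ℂ)) • (V (s * t) * C * V ((1 - s) * t)) u)) s := by
      intro s
      have hw : V ((1 - s) * t) u ∈ Dom := hVdom _ _ hu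
      have e1 : HasDerivAt (fun s : ℝ => (1 - s) * t) (-t) s := by
        simpa using ((hasDerivAt_id s).const_sub 1).mul_const t
      have e2 : HasDerivAt (fun s : ℝ => s * t) t s := by
        simpa using (hasDerivAt_id s).mul_const t
      have g1 := (hVderiv ((1 - s) * t) u hu).scomp s e1
      have g2 : HasDerivAt (fun s : ℝ => M (V ((1 - s) * t) u))
          (M (-t • Complex.I • V ((1 - s) * t) (D u))) s :=
        (M.restrictScalars ℝ).hasFDerivAt.comp_hasDerivAt s g1
      have g3 := (hVderiv (s * t) (M (V ((1 - s) * t) u)) (hM _ hw)).scomp s e2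
      have := hcf_deriv (fun r => V (r * t)) (fun u => (hVcont u).comp (by fun_prop))
        (fun s : ℝ => M (V ((1 - s) * t) u)) _ _ s g2 g3
      convert this using 1
      have hr : ∀ (c : ℝ) (y : X), c • y = (c : ℂ) • y := fun c y => by
        rw [← algebraMap_smul ℂ c y]; rfl
      simp only [hcf_mul_apply, hC _ hw, hVD _ _ hu, hr, map_smul, map_sub,
        smul_sub, smul_smul]
      rw [mul_comm Complex.I]
      push_cast
      simp only [neg_mul, neg_smul]
      abel
    have hI := intervalIntegral.integral_eq_sub_of_hasDerivAt (a := 0) (b := 1)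
      (fun s _ => hd s) (((hc u).const_smul _).neg.intervalIntegrable 0 1)
    rw [intervalIntegral.integral_neg, intervalIntegral.integral_smul] at hI
    simp only [one_mul, zero_mul, sub_self, sub_zero, hV0, ContinuousLinearMap.id_apply] at hI
    simp only [_root_.sub_apply, hcf_mul_apply] at hI ⊢
    rw [← neg_sub, ← hI, neg_neg]
  exact fun u => congrFun key u

end Helpers

/-- **Higher commutator formula** (McIntosh–Morris, equation (3.5)):
`δ^{m₀+1}(e^{itD})u = it ∫₀¹ Σ_k binom(m₀,k) δ^{m₀-k}(e^{istD}) C_η δ^k(e^{i(1-s)tD}) u ds`. -/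
theorem higher_commutator_formula
    {M : Type*} [MetricSpace M] [MeasurableSpace M] [BorelSpace M]
    (μ : Measure M) [SigmaFinite μ]
    (m : ℕ) (hm : 1 ≤ m) (p : ENNReal) [hp1 : Fact (1 ≤ p)] (hp2 : p ≠ ⊤)
    (Dom : Submodule ℂ (Lp (EuclideanSpace ℂ (Fin m)) p μ))
    (hdense : Dense (Dom : Set (Lp (EuclideanSpace ℂ (Fin m)) p μ)))
    (D : Lp (EuclideanSpace ℂ (Fin m)) p μ → Lp (EuclideanSpace ℂ (Fin m)) p μ)
    (hDadd : ∀ u ∈ Dom, ∀ v ∈ Dom, D (u + v) = D u + D v)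
    (hDsmul : ∀ (a : ℂ), ∀ u ∈ Dom, D (a • u) = a • D u)
    (V : ℝ → Lp (EuclideanSpace ℂ (Fin m)) p μ →L[ℂ]
      Lp (EuclideanSpace ℂ (Fin m)) p μ)
    (hV0 : V 0 = ContinuousLinearMap.id ℂ _)
    (hVgrp : ∀ s t : ℝ, V (s + t) = (V s).comp (V t))
    (hVcont : ∀ u, Continuous fun t => V t u)
    (hVdom : ∀ t : ℝ, ∀ u ∈ Dom, V t u ∈ Dom)
    (hVderiv : ∀ t : ℝ, ∀ u ∈ Dom,
      HasDerivAt (fun s => V s u) (Complex.I • V t (D u)) t)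
    (hVD : ∀ t : ℝ, ∀ u ∈ Dom, V t (D u) = D (V t u))
    (η : M → ℝ) (L : NNReal) (hηLip : LipschitzWith L η) (hηbdd : ∃ C, ∀ x, |η x| ≤ C)
    (Mη : Lp (EuclideanSpace ℂ (Fin m)) p μ →L[ℂ] Lp (EuclideanSpace ℂ (Fin m)) p μ)
    (hMη : ∀ u, (Mη u : M → EuclideanSpace ℂ (Fin m))
      =ᵐ[μ] fun x => (η x : ℂ) • (u : M → EuclideanSpace ℂ (Fin m)) x)
    (hMηdom : ∀ u ∈ Dom, Mη u ∈ Dom)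
    (Cη : Lp (EuclideanSpace ℂ (Fin m)) p μ →L[ℂ] Lp (EuclideanSpace ℂ (Fin m)) p μ)
    (hCη : ∀ u ∈ Dom, Cη u = Mη (D u) - D (Mη u))
    (hCηMη : ∀ u, Mη (Cη u) = Cη (Mη u))
    (m₀ : ℕ) (t : ℝ) (u : Lp (EuclideanSpace ℂ (Fin m)) p μ) :
    ((fun T => Mη.comp T - T.comp Mη)^[m₀ + 1] (V t)) u =
      (Complex.I * (t : ℂ)) •
        ∫ s in (0:ℝ)..1, ∑ k ∈ Finset.range (m₀ + 1),
          (Nat.choose m₀ k : ℂ) •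
            ((fun T => Mη.comp T - T.comp Mη)^[m₀ - k] (V (s * t)))
              (Cη (((fun T => Mη.comp T - T.comp Mη)^[k] (V ((1 - s) * t))) u)) := by
  obtain ⟨hc, hb⟩ := hcf_base Dom hdense D V hV0 hVcont hVdom hVderiv hVD Mη Cη hMηdom hCη t
  have hMC : Mη * Cη = Cη * Mη := ContinuousLinearMap.ext hCηMη
  have h := hcf_iterate Mη (Complex.I * (t : ℂ)) m₀ _ _ hc hb u
  rw [Function.iterate_succ_apply]
  refine h.trans ?_
  congr 1
  refine intervalIntegral.integral_congr fun s _ => ?_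
  simp only [hcf_leibniz Mη Cη hMC]
  rw [Finset.Nat.sum_antidiagonal_eq_sum_range_succ_mk, ContinuousLinearMap.sum_apply]
  refine Finset.sum_congr rfl fun k _ => ?_
  rw [ContinuousLinearMap.smul_apply, ← Nat.cast_smul_eq_nsmul ℂ]
  rfl
end
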